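/- The function u is continuously differentiable on the whole open square Ω₁ (including across the diagonal), and its gradient is ∇u(x) = g(x)ᵀ, where g : Ω₁ → B₁ is the inverse of ∇wᵀ. -/

import Mathlib

/-!
Write `F(x; r, θ) = r (x₁ cos θ + x₂ sin θ) - W(r, θ)`, so that `u(x) = min_θ max_r F(x; r, θ)`. For
fixed `(r, θ)` the payoff `F` is affine in `x` with gradient `G(r, θ) = (r cos θ, r sin θ)`. Hence
`u` is `C¹` with gradient `g` as soon as every minimax point `(r, θ)` for `x ∈ Ω₁` satisfies
`G(r, θ) = g(x)`. This envelope principle is `minimax_envelope`: it compares `u(x)` and `u(y)` by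
pairing the outer minimiser of one with the inner maximiser of the other, and compactness makes all
such pairs land near `g(x)`.

It remains to show that a minimax point lies in the open sector and that `∇w` there equals `x`
(`gradw_eq_of_minimax`); then `g(x) = G(r, θ)` because `g` inverts `∇wᵀ`.

* For interior `θ`, `W(·, θ)` is strictly convex (`Wrr_pos`), so the radial maximiser is unique; for
  `θ ∈ {0, π/2}` one has `W = 0` and the maximiser is `r = 1`. Since `mₙ²` is affine in the
  triangular numbers, `∂_r² W` is a theta series, and its positivity (`theta_sin_series_pos`) comes
  from a finite form of the Jacobi triple product.
* For interior `θ` the maximiser satisfies `0 < r < 1`: the slope at `r = 0` is positive, and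
  `∂_r W → cos θ + sin θ > x₁ cos θ + x₂ sin θ` as `r → 1` (`tendsto_Wr`). So `∂_r F = 0`.
* Uniqueness of the inner maximiser gives a first-order condition in `θ` (`minimax_first_order`). It
  excludes the endpoints because `∂_θ W(1, 0) = 1` and `∂_θ W(1, π/2) = -1`, and at an interior
  angle it reads `∂_θ F = 0`.

The equations `∂_r F = ∂_θ F = 0` say precisely that `∇w = x` at `G(r, θ)` (`gradw_polar`).
-/

open Real Set Topology Filter

/-- `mIdx n = 4(n+1) - 2 = 4n + 2`, the odd-indexed frequencies `2, 6, 10, …`. -/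
def mIdx (n : ℕ) : ℕ := 4 * n + 2

/-- `W(r,θ) = (8/π) ∑_{n≥1} r^{mₙ²} sin(mₙ θ) / ((mₙ² − 1) mₙ)` with `mₙ = 4n − 2`. -/
noncomputable def W (r θ : ℝ) : ℝ :=
  (8 / π) * ∑' n : ℕ,
    r ^ (mIdx n ^ 2) * Real.sin ((mIdx n : ℝ) * θ) / (((mIdx n : ℝ) ^ 2 - 1) * (mIdx n : ℝ))

/-- The minimax formula `u(x,y) = min_{θ∈[0,π/2]} max_{r∈[0,1]} ( r(x cos θ + y sin θ) − W(r,θ) )`.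
(The extrema are attained, so `⨅`/`⨆` over the compact index sets agree with min/max.) -/
noncomputable def u (x y : ℝ) : ℝ :=
  ⨅ θ : Icc (0 : ℝ) (π / 2), ⨆ r : Icc (0 : ℝ) 1,
    ((r : ℝ) * (x * Real.cos (θ : ℝ) + y * Real.sin (θ : ℝ)) - W (r : ℝ) (θ : ℝ))

/-- `w` in Cartesian coordinates: `w(r cos θ, r sin θ) = W(r,θ)`.  On the open sector `B₁`
(where `p, q > 0`) this is `W(√(p²+q²), arctan(q/p))`. -/
noncomputable def w (p q : ℝ) : ℝ := W (Real.sqrt (p ^ 2 + q ^ 2)) (Real.arctan (q / p))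

/-- First partial `w_p`. -/
noncomputable def wp (p q : ℝ) : ℝ := deriv (fun s => w s q) p
/-- First partial `w_q`. -/
noncomputable def wq (p q : ℝ) : ℝ := deriv (fun t => w p t) q
/-- Second partial `w_{pp}`. -/
noncomputable def wpp (p q : ℝ) : ℝ := deriv (fun s => wp s q) p
/-- Second partial `w_{qq}`. -/
noncomputable def wqq (p q : ℝ) : ℝ := deriv (fun t => wq p t) q
/-- Mixed second partial `w_{pq}`. -/
noncomputable def wpq (p q : ℝ) : ℝ := deriv (fun t => wp p t) q

/-- The open sector `B₁` in the first quadrant. -/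
def B1 : Set (ℝ × ℝ) := {p : ℝ × ℝ | 0 < p.1 ∧ 0 < p.2 ∧ p.1 ^ 2 + p.2 ^ 2 < 1}

/-- The open unit square `Ω₁ = (0,1)²`. -/
def Ω1 : Set (ℝ × ℝ) := (Ioo (0 : ℝ) 1) ×ˢ Ioo (0 : ℝ) 1

/-- The (transposed) gradient map `∇wᵀ : (p,q) ↦ (w_p, w_q)`. -/
noncomputable def gradw (p : ℝ × ℝ) : ℝ × ℝ := (wp p.1 p.2, wq p.1 p.2)

/-! ### Positivity of a theta series -/

/-- Coefficients of the finite Jacobi triple product: `thetaCoef p N n` is the coefficient of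
`cos ((2n+1)φ)` in `cos φ * ∏_{k=1}^N (1 + 2 pᵏ cos 2φ + p²ᵏ)`, defined through the recursion that
multiplication by one more factor induces. -/
noncomputable def thetaCoef (p : ℝ) : ℕ → ℕ → ℝ
  | 0, 0 => 1
  | 0, _ + 1 => 0
  | N + 1, 0 => (1 + (p ^ (N + 1)) ^ 2 + p ^ (N + 1)) * thetaCoef p N 0
      + p ^ (N + 1) * thetaCoef p N 1
  | N + 1, n + 1 => (1 + (p ^ (N + 1)) ^ 2) * thetaCoef p N (n + 1)
      + p ^ (N + 1) * (thetaCoef p N n + thetaCoef p N (n + 2))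

/-- The partial product `∏_{k=1}^N (1 + 2 pᵏ cos 2φ + p²ᵏ)`; after multiplication by `cos φ` its
`φ`-derivative produces the sine series of `theta_sin_series_pos`. -/
noncomputable def thetaProd (p φ : ℝ) (N : ℕ) : ℝ :=
  ∏ k ∈ Finset.range N, (1 + 2 * p ^ (k + 1) * cos (2 * φ) + (p ^ (k + 1)) ^ 2)

lemma thetaCoef_eq_zero (p : ℝ) : ∀ N n : ℕ, N < n → thetaCoef p N n = 0 := by
  intro N
  induction N with
  | zero =>
    intro n hn
    obtain ⟨k, rfl⟩ := Nat.exists_eq_succ_of_ne_zero (by omega : n ≠ 0)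
    rfl
  | succ N ih =>
    intro n hn
    obtain ⟨k, rfl⟩ := Nat.exists_eq_succ_of_ne_zero (by omega : n ≠ 0)
    simp only [thetaCoef]
    rw [ih (k + 1) (by omega), ih k (by omega), ih (k + 2) (by omega)]
    ring

lemma thetaCoef_nonneg {p : ℝ} (hp : 0 ≤ p) : ∀ N n : ℕ, 0 ≤ thetaCoef p N n := by
  intro N
  induction N with
  | zero => intro n; cases n <;> simp [thetaCoef]
  | succ N ih =>
    intro n
    have h := pow_nonneg hp (N + 1)
    cases n with
    | zero => simp only [thetaCoef]; have := ih 0; have := ih 1; positivity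
    | succ n =>
      simp only [thetaCoef]
      have := ih n; have := ih (n + 1); have := ih (n + 2); positivity

lemma one_le_thetaCoef_zero {p : ℝ} (hp : 0 ≤ p) (N : ℕ) : 1 ≤ thetaCoef p N 0 := by
  induction N with
  | zero => simp [thetaCoef]
  | succ N ih =>
    simp only [thetaCoef]
    have h := pow_nonneg hp (N + 1)
    have := thetaCoef_nonneg hp N 1
    nlinarith [mul_nonneg h this, mul_nonneg (add_nonneg (sq_nonneg (p ^ (N+1))) h) (zero_le_one.trans ih)]

/-- Ratio of consecutive coefficients, cleared of denominators. Together with `N → ∞` it forces the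
triangular exponents: the ratio tends to `p ^ (n + 1)`. -/
lemma thetaCoef_ratio (p : ℝ) : ∀ N n : ℕ,
    (p ^ (n + 1) - p ^ (N + 1)) * thetaCoef p N n
      = (1 - p ^ (N + 1) * p ^ (n + 1)) * thetaCoef p N (n + 1) := by
  intro N
  induction N with
  | zero => intro n; cases n <;> simp [thetaCoef]
  | succ N ih =>
    intro n
    cases n with
    | zero =>
      have h0 := ih 0
      have h1 := ih 1
      simp only [thetaCoef]
      simp only [zero_add, pow_succ, pow_zero, one_mul] at h0 h1 ⊢
      linear_combination (1 + p * (p ^ N * p) ^ 2) * h0 + (p ^ N * p) * h1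
    | succ n =>
      have h0 := ih n
      have h1 := ih (n + 1)
      have h2 := ih (n + 2)
      simp only [thetaCoef]
      simp only [pow_succ] at h0 h1 h2 ⊢
      linear_combination (p * (p ^ N * p)) * h0 + (1 + p * (p ^ N * p) ^ 2) * h1 + (p ^ N * p) * h2

/-- Finite form of the Jacobi triple product identity. -/
lemma cos_mul_thetaProd (p φ : ℝ) (N : ℕ) :
    cos φ * thetaProd p φ N
      = ∑ n ∈ Finset.range (N + 1), thetaCoef p N n * cos ((2 * n + 1) * φ) := by
  induction N with
  | zero => simp [thetaProd, thetaCoef]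
  | succ N ih =>
    have hprod : thetaProd p φ (N + 1) = thetaProd p φ N *
        (1 + 2 * p ^ (N + 1) * cos (2 * φ) + (p ^ (N + 1)) ^ 2) := by
      rw [thetaProd, Finset.prod_range_succ]; rfl
    rw [hprod, ← mul_assoc, ih]
    set P := p ^ (N + 1) with hP
    set e := thetaCoef p N with he
    set c : ℕ → ℝ := fun n => cos ((2 * n + 1) * φ) with hc
    have key0 : 2 * cos (2 * φ) * c 0 = c 1 + c 0 := by
      simp only [hc]
      have := Real.cos_add_cos ((2 * (1 : ℕ) + 1) * φ) ((2 * (0 : ℕ) + 1) * φ)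
      rw [this]; push_cast; ring_nf
    have key : ∀ n, 2 * cos (2 * φ) * c (n + 1) = c (n + 2) + c n := by
      intro n
      simp only [hc]
      rw [Real.cos_add_cos]; push_cast
      have h1 : ((2 * ((n : ℝ) + 2) + 1) * φ + (2 * n + 1) * φ) / 2 = (2 * (n + 1) + 1) * φ := by ring
      have h2 : ((2 * ((n : ℝ) + 2) + 1) * φ - (2 * n + 1) * φ) / 2 = 2 * φ := by ring
      rw [h1, h2]; ring
    have ez : ∀ n, N < n → e n = 0 := fun n hn => thetaCoef_eq_zero p N n hn
    have hs1 : ∑ n ∈ Finset.range (N + 1), e n * c n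
        = e 0 * c 0 + ∑ n ∈ Finset.range (N + 1), e (n + 1) * c (n + 1) := by
      rw [Finset.sum_range_succ (fun n => e (n + 1) * c (n + 1)), ez (N + 1) (by omega),
        Finset.sum_range_succ' (fun n => e n * c n)]
      ring
    have hs2 : ∑ n ∈ Finset.range (N + 1), e (n + 1) * c n
        = e 1 * c 0 + ∑ n ∈ Finset.range (N + 1), e (n + 2) * c (n + 1) := by
      rw [Finset.sum_range_succ (fun n => e (n + 2) * c (n + 1)), ez (N + 2) (by omega),
        Finset.sum_range_succ' (fun n => e (n + 1) * c n)]
      ring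
    have hmul : 2 * cos (2 * φ) * ∑ n ∈ Finset.range (N + 1), e n * c n
        = e 0 * c 0 + ∑ n ∈ Finset.range (N + 1), e n * c (n + 1)
          + ∑ n ∈ Finset.range (N + 1), e (n + 1) * c n := by
      have hs3 : ∑ n ∈ Finset.range (N + 1), e (n + 1) * c (n + 2)
          = ∑ n ∈ Finset.range (N + 1), e n * c (n + 1) - e 0 * c 1 := by
        rw [Finset.sum_range_succ (fun n => e (n + 1) * c (n + 2)), ez (N + 1) (by omega),
          Finset.sum_range_succ' (fun n => e n * c (n + 1))]
        ring
      rw [hs1, mul_add, Finset.mul_sum]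
      have : ∀ n ∈ Finset.range (N + 1), 2 * cos (2 * φ) * (e (n + 1) * c (n + 1))
          = e (n + 1) * c (n + 2) + e (n + 1) * c n := by
        intro n _; linear_combination e (n + 1) * key n
      rw [Finset.sum_congr rfl this, Finset.sum_add_distrib, hs3]
      linear_combination e 0 * key0
    rw [Finset.sum_range_succ' _ (N + 1)]
    have hterm : ∀ n ∈ Finset.range (N + 1),
        thetaCoef p (N + 1) (n + 1) * cos ((2 * ((n + 1 : ℕ) : ℝ) + 1) * φ)
        = (1 + P ^ 2) * (e (n + 1) * c (n + 1)) + P * (e n * c (n + 1))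
          + P * (e (n + 2) * c (n + 1)) := by
      intro n _
      simp only [thetaCoef, ← hP, ← he, hc]; ring
    rw [Finset.sum_congr rfl hterm, Finset.sum_add_distrib, Finset.sum_add_distrib,
      ← Finset.mul_sum, ← Finset.mul_sum, ← Finset.mul_sum]
    have h00 : thetaCoef p (N + 1) 0 * cos ((2 * ((0 : ℕ) : ℝ) + 1) * φ)
        = (1 + P ^ 2 + P) * (e 0 * c 0) + P * (e 1 * c 0) := by
      simp only [thetaCoef, ← hP, ← he, hc]; ring
    rw [h00]
    change (∑ n ∈ Finset.range (N + 1), e n * c n) * _ = _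
    linear_combination P * hmul + (1 + P ^ 2) * hs1 + P * hs2

/-- Each factor is at least its value `(1 - pᵏ)²` at `cos 2φ = -1`. -/
lemma thetaProd_lower {p : ℝ} (hp0 : 0 ≤ p) (φ : ℝ) (N : ℕ) :
    (∏ k ∈ Finset.range N, (1 - p ^ (k + 1))) ^ 2 ≤ thetaProd p φ N := by
  rw [thetaProd, ← Finset.prod_pow]
  apply Finset.prod_le_prod
  · intro k _; positivity
  · intro k _
    have h := pow_nonneg hp0 (k + 1)
    have := neg_one_le_cos (2 * φ)
    nlinarith

/-- Every factor is nonnegative and decreases in `φ` while `sin 2φ ≥ 0`, so the product decreases. -/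
lemma exists_deriv_thetaProd {p : ℝ} (hp0 : 0 ≤ p) {φ : ℝ}
    (hs : 0 ≤ sin (2 * φ)) (N : ℕ) :
    ∃ D, D ≤ 0 ∧ HasDerivAt (fun x => thetaProd p x N) D φ := by
  induction N with
  | zero => exact ⟨0, le_rfl, by simpa [thetaProd] using hasDerivAt_const φ (1 : ℝ)⟩
  | succ N ih =>
    obtain ⟨D, hD, h⟩ := ih
    have hcos : HasDerivAt (fun x : ℝ => 1 + 2 * p ^ (N + 1) * cos (2 * x) + (p ^ (N + 1)) ^ 2)
        (2 * p ^ (N + 1) * (-sin (2 * φ) * 2)) φ := by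
      have h2 : HasDerivAt (fun x : ℝ => 2 * x) 2 φ := by
        simpa using (hasDerivAt_id φ).const_mul (2 : ℝ)
      exact ((h2.cos.const_mul (2 * p ^ (N + 1))).const_add 1).add_const _
    have hnn : ∀ k : ℕ, 0 ≤ 1 + 2 * p ^ (k + 1) * cos (2 * φ) + (p ^ (k + 1)) ^ 2 := by
      intro k
      have h := pow_nonneg hp0 (k + 1)
      have := neg_one_le_cos (2 * φ)
      nlinarith [sq_nonneg (1 - p ^ (k + 1))]
    have hP : 0 ≤ thetaProd p φ N := Finset.prod_nonneg fun k _ => hnn k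
    refine ⟨_, ?_, (h.mul hcos).congr_of_eventuallyEq (.of_forall fun x => ?_)⟩
    · have := pow_nonneg hp0 (N + 1)
      have h1 := mul_nonneg (neg_nonneg.2 hD) (hnn N)
      have h2 := mul_nonneg hP (mul_nonneg this hs)
      nlinarith
    · simp [thetaProd, Finset.prod_range_succ]

/-- Lower bound obtained by differentiating `cos_mul_thetaProd`:
`-(cos φ · P)' = sin φ · P - cos φ · P' ≥ sin φ · P`. -/
lemma thetaCoef_sin_sum_lower {p : ℝ} (hp0 : 0 ≤ p) {φ : ℝ}
    (h0 : 0 ≤ φ) (h1 : φ ≤ π / 2) (N : ℕ) :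
    sin φ * (∏ k ∈ Finset.range N, (1 - p ^ (k + 1))) ^ 2 ≤
      ∑ n ∈ Finset.range (N + 1), thetaCoef p N n * ((2 * n + 1) * sin ((2 * n + 1) * φ)) := by
  have hs2 : 0 ≤ sin (2 * φ) := sin_nonneg_of_nonneg_of_le_pi (by linarith) (by linarith)
  have hs : 0 ≤ sin φ := sin_nonneg_of_nonneg_of_le_pi (by linarith) (by linarith [pi_pos])
  have hc : 0 ≤ cos φ := cos_nonneg_of_neg_pi_div_two_le_of_le (by linarith [pi_pos]) h1
  obtain ⟨D, hD, h⟩ := exists_deriv_thetaProd hp0 hs2 N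
  have hd1 := (hasDerivAt_cos φ).mul h
  have hd2 : HasDerivAt (fun x => ∑ n ∈ Finset.range (N + 1), thetaCoef p N n * cos ((2 * n + 1) * x))
      (∑ n ∈ Finset.range (N + 1), thetaCoef p N n * (-sin ((2 * n + 1) * φ) * (2 * n + 1))) φ := by
    apply HasDerivAt.fun_sum
    intro n _
    have h2 : HasDerivAt (fun x : ℝ => (2 * (n : ℝ) + 1) * x) (2 * n + 1) φ := by
      simpa using (hasDerivAt_id φ).const_mul (2 * (n : ℝ) + 1)
    exact h2.cos.const_mul _
  have heq := hd1.unique (hd2.congr_of_eventuallyEq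
    (.of_forall fun x => cos_mul_thetaProd p x N))
  have hlow := mul_le_mul_of_nonneg_left (thetaProd_lower hp0 φ N) hs
  have : ∑ n ∈ Finset.range (N + 1), thetaCoef p N n * (-sin ((2 * n + 1) * φ) * (2 * n + 1))
      = -∑ n ∈ Finset.range (N + 1), thetaCoef p N n * ((2 * n + 1) * sin ((2 * n + 1) * φ)) := by
    rw [← Finset.sum_neg_distrib]; exact Finset.sum_congr rfl fun n _ => by ring
  nlinarith [mul_nonneg hc (neg_nonneg.2 hD)]

/-- All coefficients are nonnegative, so the zeroth one is at most their sum, which is the product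
at `φ = 0`. -/
lemma thetaCoef_zero_le {p : ℝ} (hp0 : 0 ≤ p) (N : ℕ) :
    thetaCoef p N 0 ≤ (∏ k ∈ Finset.range N, (1 + p ^ (k + 1))) ^ 2 := by
  have h := cos_mul_thetaProd p 0 N
  simp only [cos_zero, mul_zero, mul_one, one_mul] at h
  have h2 : thetaProd p 0 N = (∏ k ∈ Finset.range N, (1 + p ^ (k + 1))) ^ 2 := by
    rw [thetaProd, ← Finset.prod_pow]
    exact Finset.prod_congr rfl fun k _ => by simp; ring
  rw [← h2, h]
  exact Finset.single_le_sum (fun n _ => thetaCoef_nonneg hp0 N n) (by simp)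

/-- The partial products of `∏ (1 - pᵏ)/(1 + pᵏ)` stay away from `0`. -/
lemma exists_prod_ratio_lower {p : ℝ} (hp0 : 0 ≤ p) (hp1 : p < 1) :
    ∃ δ > 0, ∀ N, δ * ∏ k ∈ Finset.range N, (1 + p ^ (k + 1))
      ≤ ∏ k ∈ Finset.range N, (1 - p ^ (k + 1)) := by
  have hlt : ∀ k : ℕ, p ^ (k + 1) < 1 := fun k => pow_lt_one₀ hp0 hp1 (by omega)
  have hsum : Summable fun k : ℕ => p ^ (k + 1) :=
    (summable_nat_add_iff 1).2 (summable_geometric_of_lt_one hp0 hp1)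
  have hl1 := Real.summable_log_one_add_of_summable hsum
  have hl2 := Real.summable_log_one_add_of_summable hsum.neg
  have hl := hl1.sub hl2
  refine ⟨exp (-∑' k, (log (1 + p ^ (k + 1)) - log (1 + -p ^ (k + 1)))), exp_pos _, fun N => ?_⟩
  have hpart := hl.sum_le_tsum (Finset.range N) (fun k _ => by
    have := pow_nonneg hp0 (k + 1)
    have := hlt k
    exact sub_nonneg.2 (log_le_log (by linarith) (by linarith)))
  have e1 : ∏ k ∈ Finset.range N, (1 + p ^ (k + 1)) =
      exp (∑ k ∈ Finset.range N, log (1 + p ^ (k + 1))) := by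
    rw [exp_sum]
    exact Finset.prod_congr rfl fun k _ => (exp_log (by positivity)).symm
  have e2 : ∏ k ∈ Finset.range N, (1 - p ^ (k + 1)) =
      exp (∑ k ∈ Finset.range N, log (1 + -p ^ (k + 1))) := by
    rw [exp_sum]
    exact Finset.prod_congr rfl fun k _ => by rw [exp_log (by linarith [hlt k])]; ring
  rw [e1, e2, ← exp_add, exp_le_exp]
  rw [Finset.sum_sub_distrib] at hpart
  linarith

/-- Bound by the triangular power, uniform in `N`; it is the domination used to let `N → ∞`. -/
lemma thetaCoef_le {p : ℝ} (hp0 : 0 ≤ p) (hp1 : p < 1) (N n : ℕ) :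
    thetaCoef p N n ≤ p ^ (n * (n + 1) / 2) * thetaCoef p N 0 := by
  induction n with
  | zero => simp
  | succ n ih =>
    have hx0 := pow_nonneg hp0 (n + 1)
    have hx1 : p ^ (n + 1) < 1 := pow_lt_one₀ hp0 hp1 (by omega)
    have hP0 := pow_nonneg hp0 (N + 1)
    have hP1 : p ^ (N + 1) < 1 := pow_lt_one₀ hp0 hp1 (by omega)
    have hr := thetaCoef_ratio p N n
    have h1 := thetaCoef_nonneg hp0 N n
    have hpos : 0 < 1 - p ^ (N + 1) * p ^ (n + 1) := by nlinarith
    have hstep : thetaCoef p N (n + 1) ≤ p ^ (n + 1) * thetaCoef p N n := by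
      refine le_of_mul_le_mul_left ?_ hpos
      rw [← hr]
      have : 0 ≤ p ^ (N + 1) * (1 - p ^ (n + 1) * p ^ (n + 1)) :=
        mul_nonneg hP0 (by nlinarith)
      nlinarith [mul_nonneg this h1]
    have hT : (n + 1) * (n + 1 + 1) / 2 = (n + 1) + n * (n + 1) / 2 := by
      have : (n + 1) * (n + 1 + 1) = n * (n + 1) + (n + 1) * 2 := by ring
      rw [this, Nat.add_mul_div_right _ _ (by norm_num)]; ring
    rw [hT, pow_add, mul_assoc]
    exact hstep.trans (mul_le_mul_of_nonneg_left ih hx0)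

lemma tendsto_thetaCoef_ratio {p : ℝ} (hp0 : 0 ≤ p) (hp1 : p < 1) (n : ℕ) :
    Tendsto (fun N => thetaCoef p N n / thetaCoef p N 0) atTop (𝓝 (p ^ (n * (n + 1) / 2))) := by
  induction n with
  | zero =>
    simp only [zero_mul, Nat.zero_div, pow_zero]
    refine tendsto_const_nhds.congr fun N => ?_
    rw [div_self (by linarith [one_le_thetaCoef_zero hp0 N])]
  | succ n ih =>
    have hT : (n + 1) * (n + 1 + 1) / 2 = (n + 1) + n * (n + 1) / 2 := by
      have : (n + 1) * (n + 1 + 1) = n * (n + 1) + (n + 1) * 2 := by ring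
      rw [this, Nat.add_mul_div_right _ _ (by norm_num)]; ring
    have hP : Tendsto (fun N : ℕ => p ^ (N + 1)) atTop (𝓝 0) :=
      (tendsto_add_atTop_iff_nat 1).2 (tendsto_pow_atTop_nhds_zero_of_lt_one hp0 hp1)
    have hlim : Tendsto (fun N : ℕ => (p ^ (n + 1) - p ^ (N + 1)) / (1 - p ^ (N + 1) * p ^ (n + 1))
        * (thetaCoef p N n / thetaCoef p N 0)) atTop
        (𝓝 ((p ^ (n + 1) - 0) / (1 - 0 * p ^ (n + 1)) * p ^ (n * (n + 1) / 2))) :=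
      (((tendsto_const_nhds.sub hP).div (tendsto_const_nhds.sub (hP.mul_const _))
        (by norm_num))).mul ih
    rw [hT, pow_add]
    have e : (p ^ (n + 1) - 0) / (1 - 0 * p ^ (n + 1)) = p ^ (n + 1) := by simp
    rw [e] at hlim
    refine hlim.congr fun N => ?_
    have hx0 := pow_nonneg hp0 (n + 1)
    have hx1 : p ^ (n + 1) < 1 := pow_lt_one₀ hp0 hp1 (by omega)
    have hP0 := pow_nonneg hp0 (N + 1)
    have hP1 : p ^ (N + 1) < 1 := pow_lt_one₀ hp0 hp1 (by omega)
    have hpos : 0 < 1 - p ^ (N + 1) * p ^ (n + 1) := by nlinarith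
    have hr := thetaCoef_ratio p N n
    have h0 := one_le_thetaCoef_zero hp0 N
    rw [div_mul_div_comm, hr, mul_div_mul_left _ _ hpos.ne']

lemma summable_theta_bound {p : ℝ} (hp0 : 0 ≤ p) (hp1 : p < 1) :
    Summable fun n : ℕ => p ^ (n * (n + 1) / 2) * (2 * (n : ℝ) + 1) := by
  have h1 : Summable fun n : ℕ => (n : ℝ) * p ^ n := by
    simpa using summable_pow_mul_geometric_of_norm_lt_one 1
      (show ‖p‖ < 1 by rwa [Real.norm_of_nonneg hp0])
  have h2 := summable_geometric_of_lt_one hp0 hp1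
  refine Summable.of_nonneg_of_le (fun n => by positivity) (fun n => ?_)
    ((h1.mul_left 2).add h2)
  have : n ≤ n * (n + 1) / 2 := by
    rw [Nat.le_div_iff_mul_le (by norm_num)]
    rcases n with _ | n
    · simp
    · nlinarith
  have := pow_le_pow_of_le_one hp0 hp1.le this
  nlinarith [mul_le_mul_of_nonneg_right this (by positivity : (0 : ℝ) ≤ 2 * n + 1)]

/-- Strict positivity of `-∂_φ` of the theta function `∑ p^{n(n+1)/2} cos ((2n+1)φ)`.
The finite identity is divided by `thetaCoef p N 0` so that its coefficients converge, and
`exists_prod_ratio_lower` keeps the lower bound away from `0`. -/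
theorem theta_sin_series_pos {p φ : ℝ} (hp0 : 0 ≤ p) (hp1 : p < 1) (h0 : 0 < φ) (h1 : φ ≤ π / 2) :
    0 < ∑' n : ℕ, p ^ (n * (n + 1) / 2) * ((2 * n + 1) * sin ((2 * n + 1) * φ)) := by
  have hs : 0 < sin φ := sin_pos_of_pos_of_lt_pi h0 (by linarith [pi_pos])
  obtain ⟨δ, hδ, hprod⟩ := exists_prod_ratio_lower hp0 hp1
  refine (by positivity : 0 < sin φ * δ ^ 2).trans_le ?_
  have hlim : Tendsto (fun N => ∑' n : ℕ, thetaCoef p N n / thetaCoef p N 0 *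
      ((2 * n + 1) * sin ((2 * n + 1) * φ))) atTop
      (𝓝 (∑' n : ℕ, p ^ (n * (n + 1) / 2) * ((2 * n + 1) * sin ((2 * n + 1) * φ)))) := by
    refine tendsto_tsum_of_dominated_convergence (summable_theta_bound hp0 hp1)
      (fun n => (tendsto_thetaCoef_ratio hp0 hp1 n).mul_const _) (.of_forall fun N n => ?_)
    have hz := one_le_thetaCoef_zero hp0 N
    rw [norm_mul, norm_mul, Real.norm_of_nonneg (div_nonneg (thetaCoef_nonneg hp0 N n) (by linarith)),
      Real.norm_of_nonneg (by positivity : (0 : ℝ) ≤ 2 * n + 1)]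
    have : thetaCoef p N n / thetaCoef p N 0 ≤ p ^ (n * (n + 1) / 2) := by
      rw [div_le_iff₀ (by linarith)]; exact thetaCoef_le hp0 hp1 N n
    refine mul_le_mul this ?_ (by positivity) (by positivity)
    exact mul_le_of_le_one_right (by positivity) (abs_sin_le_one _)
  refine ge_of_tendsto' hlim fun N => ?_
  have hz := one_le_thetaCoef_zero hp0 N
  rw [tsum_eq_sum (s := Finset.range (N + 1)) (fun n hn => by
    rw [thetaCoef_eq_zero p N n (by simpa using hn)]; simp)]
  have e : ∑ n ∈ Finset.range (N + 1), thetaCoef p N n / thetaCoef p N 0 *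
      ((2 * n + 1) * sin ((2 * n + 1) * φ)) = (∑ n ∈ Finset.range (N + 1), thetaCoef p N n *
      ((2 * n + 1) * sin ((2 * n + 1) * φ))) / thetaCoef p N 0 := by
    rw [Finset.sum_div]; exact Finset.sum_congr rfl fun n _ => by ring
  rw [e, le_div_iff₀ (by linarith)]
  refine le_trans ?_ (thetaCoef_sin_sum_lower hp0 h0.le h1 N)
  rw [mul_assoc]
  refine mul_le_mul_of_nonneg_left ?_ hs.le
  have hA : 0 ≤ ∏ k ∈ Finset.range N, (1 + p ^ (k + 1)) :=
    Finset.prod_nonneg fun k _ => by positivity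
  calc δ ^ 2 * thetaCoef p N 0 ≤ δ ^ 2 * (∏ k ∈ Finset.range N, (1 + p ^ (k + 1))) ^ 2 :=
        mul_le_mul_of_nonneg_left (thetaCoef_zero_le hp0 N) (by positivity)
    _ = (δ * ∏ k ∈ Finset.range N, (1 + p ^ (k + 1))) ^ 2 := by ring
    _ ≤ _ := pow_le_pow_left₀ (by positivity) (hprod N) 2

/-! ### Square waves and Abel limits -/

lemma two_sin_mul_sum_sin_odd (φ : ℝ) (n : ℕ) :
    2 * sin φ * ∑ i ∈ Finset.range n, sin ((2 * i + 1) * φ) = 1 - cos (2 * n * φ) := by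
  induction n with
  | zero => simp
  | succ n ih =>
    rw [Finset.sum_range_succ, mul_add, ih]
    have h1 : 2 * ((n + 1 : ℕ) : ℝ) * φ = (2 * n + 1) * φ + φ := by push_cast; ring
    have h2 : 2 * (n : ℝ) * φ = (2 * n + 1) * φ - φ := by ring
    rw [h1, h2, cos_add, cos_sub]; ring

/-- The Fourier series of the square wave: `∑ sin ((2i+1)φ)/(2i+1) = π/4` on `(0, π)`. -/
lemma tendsto_sum_sin_odd {φ : ℝ} (h0 : 0 < φ) (h1 : φ < π) :
    Tendsto (fun N => ∑ i ∈ Finset.range N, sin ((2 * i + 1) * φ) / (2 * i + 1)) atTop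
      (𝓝 (π / 4)) := by
  have hs : 0 < sin φ := sin_pos_of_pos_of_lt_pi h0 h1
  -- Dirichlet's test gives convergence
  have hcauchy : CauchySeq fun N => ∑ i ∈ Finset.range N,
      (1 / (2 * (i : ℝ) + 1)) • sin ((2 * i + 1) * φ) := by
    refine Antitone.cauchySeq_series_mul_of_tendsto_zero_of_bounded (b := 1 / sin φ) ?_ ?_ ?_
    · intro a b hab
      have : (a : ℝ) ≤ b := by exact_mod_cast hab
      exact one_div_le_one_div_of_le (by positivity) (by linarith)
    · have : Tendsto (fun i : ℕ => 2 * (i : ℝ) + 1) atTop atTop :=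
        tendsto_atTop_add_const_right _ _ (tendsto_natCast_atTop_atTop.const_mul_atTop two_pos)
      simpa [Pi.inv_def] using this.inv_tendsto_atTop
    · intro n
      have h := two_sin_mul_sum_sin_odd φ n
      have c1 := neg_one_le_cos (2 * n * φ)
      have c2 := cos_le_one (2 * n * φ)
      rw [Real.norm_eq_abs, abs_le, ← neg_div, div_le_iff₀ hs, le_div_iff₀ hs]
      constructor <;> nlinarith
  obtain ⟨l, hl⟩ := cauchySeq_tendsto_of_complete hcauchy
  have hl' : Tendsto (fun N => ∑ i ∈ Finset.range N, sin ((2 * i + 1) * φ) / (2 * i + 1)) atTop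
      (𝓝 l) := hl.congr fun N => Finset.sum_congr rfl fun i _ => by
        rw [smul_eq_mul, div_mul_eq_mul_div, one_mul]
  -- Abel's theorem identifies the limit through the logarithm series
  have habel := Real.tendsto_tsum_powerSeries_nhdsWithin_lt hl'
  have hsq : Tendsto (fun x : ℝ => x ^ 2) (𝓝[<] 1) (𝓝[<] 1) := by
    refine tendsto_nhdsWithin_iff.2 ⟨?_, ?_⟩
    · have : Tendsto (fun x : ℝ => x ^ 2) (𝓝 1) (𝓝 (1 ^ 2)) := (continuous_pow 2).tendsto 1
      rw [one_pow] at this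
      exact this.mono_left nhdsWithin_le_nhds
    · have : ∀ᶠ x : ℝ in 𝓝[<] 1, x ∈ Ioo (0 : ℝ) 1 := Ioo_mem_nhdsLT one_pos
      filter_upwards [this] with x hx
      exact pow_lt_one₀ hx.1.le hx.2 two_ne_zero
  have hid : Tendsto (fun x : ℝ => x) (𝓝[<] 1) (𝓝 1) := tendsto_id.mono_left nhdsWithin_le_nhds
  have hA := hid.mul (habel.comp hsq)
  let E : ℂ := Complex.cos φ + Complex.sin φ * Complex.I
  have hEn : ‖E‖ = 1 := Complex.norm_cos_add_sin_mul_I φ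
  have hEpow : ∀ k : ℕ, (E ^ k).im = sin (k * φ) := by
    intro k
    rw [Complex.cos_add_sin_mul_I_pow]
    have : ((k : ℂ) * φ) = ((k * φ : ℝ) : ℂ) := by push_cast; rfl
    rw [this, ← Complex.ofReal_cos, ← Complex.ofReal_sin, Complex.add_im, Complex.ofReal_im,
      Complex.im_ofReal_mul, Complex.I_im]
    ring
  have hB : ∀ x ∈ Ioo (0 : ℝ) 1,
      x * ∑' n : ℕ, sin ((2 * n + 1) * φ) / (2 * n + 1) * (x ^ 2) ^ n
        = (Complex.arg (1 + x * E) - Complex.arg (1 - x * E)) / 2 := by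
    intro x hx
    have hz : ‖(x : ℂ) * E‖ < 1 := by
      rw [norm_mul, hEn, mul_one, Complex.norm_real, Real.norm_of_nonneg hx.1.le]; exact hx.2
    have hz' : ‖-((x : ℂ) * E)‖ < 1 := by rwa [norm_neg]
    have s1 := Complex.hasSum_im (Complex.hasSum_taylorSeries_neg_log hz)
    have s2 := Complex.hasSum_im (Complex.hasSum_taylorSeries_neg_log hz')
    have s := (s1.sub s2).div_const 2
    have hinj : Function.Injective fun n : ℕ => 2 * n + 1 := fun a b h => by
      simp only at h; omega
    rw [← hinj.hasSum_iff] at s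
    · rw [sub_neg_eq_add, Complex.neg_im, Complex.neg_im, Complex.log_im, Complex.log_im] at s
      have e : (-(1 - (x : ℂ) * E).arg - -(1 + (x : ℂ) * E).arg) / 2
          = (Complex.arg (1 + x * E) - Complex.arg (1 - x * E)) / 2 := by ring
      rw [e] at s
      rw [← s.tsum_eq, ← tsum_mul_left]
      refine tsum_congr fun n => ?_
      have h1 : (((x : ℂ) * E) ^ (2 * n + 1) / ((2 * n + 1 : ℕ) : ℂ)).im
          = x ^ (2 * n + 1) * sin ((2 * n + 1) * φ) / (2 * n + 1) := by
        rw [mul_pow, ← Complex.ofReal_pow, ← Complex.ofReal_natCast, Complex.div_ofReal_im,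
          Complex.im_ofReal_mul, hEpow]
        push_cast; rfl
      simp only [Function.comp]
      rw [Odd.neg_pow ⟨n, rfl⟩, neg_div, Complex.neg_im, h1]
      rw [pow_succ x (2 * n), pow_mul]; ring
    · intro k hk
      have hev : Even k := by
        by_contra h
        obtain ⟨n, hn⟩ := Nat.not_even_iff_odd.1 h
        exact hk ⟨n, hn.symm⟩
      rw [hev.neg_pow]; simp
  have hcont : Tendsto (fun x : ℝ => (Complex.arg (1 + x * E) - Complex.arg (1 - x * E)) / 2)
      (𝓝[<] 1) (𝓝 ((Complex.arg (1 + E) - Complex.arg (1 - E)) / 2)) := by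
    have hEim : E.im = sin φ := by simpa using hEpow 1
    have c1 : ContinuousAt (fun x : ℝ => Complex.arg (1 + x * E)) 1 := by
      refine (Complex.continuousAt_arg ?_).comp (f := fun x : ℝ => 1 + (x : ℂ) * E) (by fun_prop)
      right; simp [hEim, hs.ne']
    have c2 : ContinuousAt (fun x : ℝ => Complex.arg (1 - x * E)) 1 := by
      refine (Complex.continuousAt_arg ?_).comp (f := fun x : ℝ => 1 - (x : ℂ) * E) (by fun_prop)
      right; simp [hEim, hs.ne']
    have := ((c1.sub c2).div_const 2).tendsto
    have e1 : ((1 : ℝ) : ℂ) * E = E := by simp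
    simp only [Pi.sub_apply] at this
    rw [e1] at this
    exact this.mono_left nhdsWithin_le_nhds
  have harg1 : Complex.arg (1 + E) = φ / 2 := by
    have : 1 + E = ((2 * cos (φ / 2) : ℝ) : ℂ) *
        (Complex.cos ((φ / 2 : ℝ) : ℂ) + Complex.sin ((φ / 2 : ℝ) : ℂ) * Complex.I) := by
      have h2 : (φ : ℂ) = 2 * ((φ / 2 : ℝ) : ℂ) := by push_cast; ring
      simp only [E]
      rw [h2, Complex.cos_two_mul, Complex.sin_two_mul, Complex.ofReal_mul, Complex.ofReal_cos]
      push_cast; ring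
    rw [this, Complex.arg_mul_cos_add_sin_mul_I]
    · have := cos_pos_of_mem_Ioo (x := φ / 2) ⟨by linarith, by linarith⟩
      positivity
    · constructor <;> linarith
  have harg2 : Complex.arg (1 - E) = φ / 2 - π / 2 := by
    have : 1 - E = ((2 * sin (φ / 2) : ℝ) : ℂ) *
        (Complex.cos ((φ / 2 - π / 2 : ℝ) : ℂ) + Complex.sin ((φ / 2 - π / 2 : ℝ) : ℂ) * Complex.I) := by
      have h2 : (φ : ℂ) = 2 * ((φ / 2 : ℝ) : ℂ) := by push_cast; ring
      simp only [E]
      rw [h2, ← Complex.ofReal_cos (φ / 2 - π / 2), ← Complex.ofReal_sin (φ / 2 - π / 2),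
        cos_sub_pi_div_two, sin_sub_pi_div_two, Complex.cos_two_mul, Complex.sin_two_mul,
        Complex.cos_sq']
      push_cast; ring
    rw [this, Complex.arg_mul_cos_add_sin_mul_I]
    · have := sin_pos_of_pos_of_lt_pi (x := φ / 2) (by linarith) (by linarith)
      positivity
    · constructor <;> linarith
  rw [harg1, harg2] at hcont
  have hC : Tendsto (fun x : ℝ => x * ∑' n : ℕ, sin ((2 * n + 1) * φ) / (2 * n + 1) * (x ^ 2) ^ n)
      (𝓝[<] 1) (𝓝 ((φ / 2 - (φ / 2 - π / 2)) / 2)) := by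
    refine hcont.congr' ?_
    have : ∀ᶠ x : ℝ in 𝓝[<] 1, x ∈ Ioo (0 : ℝ) 1 := Ioo_mem_nhdsLT one_pos
    filter_upwards [this] with x hx
    exact (hB x hx).symm
  have hlast := tendsto_nhds_unique hA hC
  have : l = π / 4 := by linarith
  rwa [this] at hl'

lemma mIdx_cast (n : ℕ) : (mIdx n : ℝ) = 4 * n + 2 := by simp [mIdx]

/-- The coefficients of `∂_r W` at `r = 1` sum conditionally to a multiple of `cos θ + sin θ`.
Partial fractions `2m/(m²-1) = 1/(m-1) + 1/(m+1)` split the sum into two square waves, at `θ` and at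
`π/2 - θ`. -/
lemma tendsto_sum_Wr_coef {θ : ℝ} (h0 : 0 < θ) (h1 : θ < π / 2) :
    Tendsto (fun N => ∑ n ∈ Finset.range N,
      (mIdx n : ℝ) * sin (mIdx n * θ) / ((mIdx n : ℝ) ^ 2 - 1)) atTop
      (𝓝 (π / 8 * (cos θ + sin θ))) := by
  have hdouble : Tendsto (fun N : ℕ => 2 * N) atTop atTop :=
    tendsto_id.const_mul_atTop' two_pos
  have t1 := (tendsto_sum_sin_odd h0 (by linarith [pi_pos])).comp hdouble
  have t2 := (tendsto_sum_sin_odd (φ := π / 2 - θ) (by linarith) (by linarith [pi_pos])).comp hdouble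
  have t := ((t1.const_mul (cos θ)).add (t2.const_mul (sin θ))).div_const 2
  have e : (cos θ * (π / 4) + sin θ * (π / 4)) / 2 = π / 8 * (cos θ + sin θ) := by ring
  rw [e] at t
  refine t.congr fun N => ?_
  simp only [Function.comp]
  induction N with
  | zero => simp
  | succ N ih =>
    rw [Finset.sum_range_succ _ N, ← ih, show 2 * (N + 1) = 2 * N + 1 + 1 by ring]
    simp only [Finset.sum_range_succ _ (2 * N + 1), Finset.sum_range_succ _ (2 * N)]
    have a1 : sin ((2 * ((2 * N : ℕ) : ℝ) + 1) * (π / 2 - θ)) = cos ((4 * N + 1) * θ) := by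
      rw [← sin_pi_div_two_sub, ← sin_add_nat_mul_two_pi (π / 2 - (4 * N + 1) * θ) N]
      congr 1; push_cast; ring
    have a2 : sin ((2 * ((2 * N + 1 : ℕ) : ℝ) + 1) * (π / 2 - θ)) = -cos ((4 * N + 3) * θ) := by
      rw [← sin_sub_pi_div_two, ← sin_pi_sub, ← sin_add_nat_mul_two_pi _ N]
      congr 1; push_cast; ring
    rw [a1, a2, mIdx_cast]
    have b1 : (2 * ((2 * N : ℕ) : ℝ) + 1) = 4 * N + 1 := by push_cast; ring
    have b2 : (2 * ((2 * N + 1 : ℕ) : ℝ) + 1) = 4 * N + 3 := by push_cast; ring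
    rw [b1, b2]
    have c1 : (4 * (N : ℝ) + 2) * θ = (4 * N + 1) * θ + θ := by ring
    have c2 : (4 * (N : ℝ) + 2) * θ = (4 * N + 3) * θ - θ := by ring
    have d1 : sin ((4 * (N : ℝ) + 2) * θ) = sin ((4 * N + 1) * θ) * cos θ + cos ((4 * N + 1) * θ) * sin θ := by
      rw [c1, sin_add]
    have d2 : sin ((4 * (N : ℝ) + 2) * θ) = sin ((4 * N + 3) * θ) * cos θ - cos ((4 * N + 3) * θ) * sin θ := by
      rw [c2, sin_sub]
    have hfrac : (4 * (N : ℝ) + 2) / ((4 * N + 2) ^ 2 - 1) = (1 / (4 * N + 1) + 1 / (4 * N + 3)) / 2 := by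
      have : (4 * (N : ℝ) + 2) ^ 2 - 1 = (4 * N + 1) * (4 * N + 3) := by ring
      rw [this]; field_simp; ring
    rw [mul_div_right_comm, hfrac]
    have : (1 / (4 * (N : ℝ) + 1) + 1 / (4 * N + 3)) / 2 * sin ((4 * (N : ℝ) + 2) * θ)
       = (sin ((4 * (N : ℝ) + 2) * θ) / (4 * N + 1) + sin ((4 * (N : ℝ) + 2) * θ) / (4 * N + 3)) / 2 := by ring
    rw [this]
    nth_rewrite 1 [d1]
    rw [d2]
    ring

/-- Abel's limit theorem for a lacunary series `∑ bₙ r ^ eₙ`. -/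
lemma tendsto_tsum_lacunary {e : ℕ → ℕ} (he : StrictMono e) {b : ℕ → ℝ} {l : ℝ}
    (h : Tendsto (fun N => ∑ n ∈ Finset.range N, b n) atTop (𝓝 l)) :
    Tendsto (fun r : ℝ => ∑' n, b n * r ^ e n) (𝓝[<] 1) (𝓝 l) := by
  have hN : ∀ J, ∃ N, (∀ n, e n < J ↔ n < N) ∧
      ∑ j ∈ Finset.range J, Function.extend e b 0 j = ∑ n ∈ Finset.range N, b n := by
    intro J
    induction J with
    | zero => exact ⟨0, by simp, by simp⟩
    | succ J ih =>
      obtain ⟨N, h1, h2⟩ := ih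
      by_cases hJ : ∃ k, e k = J
      · obtain ⟨k, hk⟩ := hJ
        have hkN : k = N := by
          have a1 : ¬ k < N := fun h => by have := (h1 k).2 h; omega
          rcases Nat.lt_or_ge N k with h | h
          · have := he h
            have := (h1 N).1 (by omega)
            omega
          · omega
        subst hkN
        refine ⟨k + 1, fun n => ?_, ?_⟩
        · rw [Nat.lt_succ_iff, Nat.lt_succ_iff, ← hk, he.le_iff_le]
        · rw [Finset.sum_range_succ, Finset.sum_range_succ, h2, ← hk, he.injective.extend_apply]
      · refine ⟨N, fun n => ?_, ?_⟩
        · rw [← h1, Nat.lt_succ_iff]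
          exact ⟨fun h => lt_of_le_of_ne h fun h' => hJ ⟨n, h'⟩, le_of_lt⟩
        · rw [Finset.sum_range_succ, h2, Function.extend_apply' _ _ _ hJ]; simp
  choose N h1 h2 using hN
  have hNt : Tendsto N atTop atTop := by
    refine tendsto_atTop.2 fun n => ?_
    filter_upwards [eventually_ge_atTop (e n + 1)] with J hJ
    exact ((h1 J n).1 (by omega)).le
  have hA := Real.tendsto_tsum_powerSeries_nhdsWithin_lt
    ((h.comp hNt).congr fun J => (h2 J).symm)
  refine hA.congr fun r => ?_
  rw [← he.injective.tsum_eq]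
  · exact tsum_congr fun n => by rw [he.injective.extend_apply]
  · intro j hj
    by_contra hne
    exact hj (by simp [Function.extend_apply' b (0 : ℕ → ℝ) j hne])

/-! ### Partial derivatives of `W` -/

/-- The series of `∂_θ W`, differentiated termwise. -/
noncomputable def Wt (r θ : ℝ) : ℝ :=
  (8 / π) * ∑' n : ℕ, r ^ (mIdx n ^ 2) * cos ((mIdx n : ℝ) * θ) / ((mIdx n : ℝ) ^ 2 - 1)

/-- The series of `∂_r W`, differentiated termwise (convergent for `|r| < 1`). -/
noncomputable def Wr (r θ : ℝ) : ℝ :=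
  (8 / π) * ∑' n : ℕ, (mIdx n : ℝ) * sin (mIdx n * θ) / ((mIdx n : ℝ) ^ 2 - 1) *
    r ^ (mIdx n ^ 2 - 1)

/-- The series of `∂_r² W`, differentiated termwise (convergent for `|r| < 1`). -/
noncomputable def Wrr (r θ : ℝ) : ℝ :=
  (8 / π) * ∑' n : ℕ, (mIdx n : ℝ) * sin (mIdx n * θ) * r ^ (mIdx n ^ 2 - 2)

/-- The exponents are affine in the triangular numbers, which makes the series of `Wrr` a theta
series in `p = r ^ 32`. -/
lemma mIdx_sq (n : ℕ) : mIdx n ^ 2 = 32 * (n * (n + 1) / 2) + 4 := by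
  have h : n * (n + 1) / 2 * 2 = n * (n + 1) := Nat.div_mul_cancel (Nat.even_mul_succ_self n).two_dvd
  have : mIdx n ^ 2 = 16 * (n * (n + 1)) + 4 := by simp only [mIdx]; ring
  omega

lemma le_mIdx_sq_sub (n : ℕ) : n + 2 ≤ mIdx n ^ 2 - 2 := by
  have : mIdx n ^ 2 = 16 * (n * (n + 1)) + 4 := by simp only [mIdx]; ring
  have : n ≤ n * (n + 1) := Nat.le_mul_of_pos_right n (by omega)
  omega

lemma mIdx_sq_sub_one_ge (n : ℕ) : ((n : ℝ) + 1) ^ 2 ≤ (mIdx n : ℝ) ^ 2 - 1 := by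
  rw [mIdx_cast]; nlinarith [(Nat.cast_nonneg n : (0 : ℝ) ≤ n)]

lemma mIdx_sq_sub_one_pos (n : ℕ) : 0 < (mIdx n : ℝ) ^ 2 - 1 :=
  (by positivity : (0 : ℝ) < ((n : ℝ) + 1) ^ 2).trans_le (mIdx_sq_sub_one_ge n)

lemma one_le_mIdx (n : ℕ) : (1 : ℝ) ≤ mIdx n := by
  rw [mIdx_cast]; linarith [(Nat.cast_nonneg n : (0 : ℝ) ≤ n)]

lemma mIdx_le_sq_sub_one (n : ℕ) : (mIdx n : ℝ) ≤ (mIdx n : ℝ) ^ 2 - 1 := by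
  rw [mIdx_cast]; nlinarith [(Nat.cast_nonneg n : (0 : ℝ) ≤ n)]

lemma summable_one_div_succ_sq : Summable fun n : ℕ => 1 / ((n : ℝ) + 1) ^ 2 := by
  have := (summable_nat_add_iff 1).2 (Real.summable_one_div_nat_pow.2 one_lt_two)
  simpa using this

lemma norm_Wt_term_le {r : ℝ} (hr : |r| ≤ 1) (θ : ℝ) (n : ℕ) :
    ‖r ^ (mIdx n ^ 2) * cos ((mIdx n : ℝ) * θ) / ((mIdx n : ℝ) ^ 2 - 1)‖ ≤ 1 / ((n : ℝ) + 1) ^ 2 := by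
  rw [norm_div, norm_mul, norm_pow, Real.norm_of_nonneg (mIdx_sq_sub_one_pos n).le]
  refine div_le_div₀ zero_le_one ?_ (by positivity) (mIdx_sq_sub_one_ge n)
  exact mul_le_one₀ (pow_le_one₀ (norm_nonneg _) hr) (norm_nonneg _) (abs_cos_le_one _)

lemma norm_W_term_le {r : ℝ} (hr : |r| ≤ 1) (θ : ℝ) (n : ℕ) :
    ‖r ^ (mIdx n ^ 2) * sin ((mIdx n : ℝ) * θ) / (((mIdx n : ℝ) ^ 2 - 1) * mIdx n)‖
      ≤ 1 / ((n : ℝ) + 1) ^ 2 := by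
  have h1 := one_le_mIdx n
  have h2 := mIdx_sq_sub_one_pos n
  rw [norm_div, norm_mul, norm_pow, Real.norm_of_nonneg (by positivity :
    0 ≤ ((mIdx n : ℝ) ^ 2 - 1) * mIdx n)]
  refine div_le_div₀ zero_le_one ?_ (by positivity) ((mIdx_sq_sub_one_ge n).trans
    (le_mul_of_one_le_right h2.le h1))
  exact mul_le_one₀ (pow_le_one₀ (norm_nonneg _) hr) (norm_nonneg _) (abs_sin_le_one _)

lemma hasDerivAt_W_theta {r : ℝ} (hr : |r| ≤ 1) (θ : ℝ) : HasDerivAt (W r) (Wt r θ) θ := by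
  refine HasDerivAt.const_mul (8 / π) (hasDerivAt_tsum summable_one_div_succ_sq
    (fun n y => ?_) (fun n y => norm_Wt_term_le hr y n)
    (Summable.of_norm_bounded summable_one_div_succ_sq (norm_W_term_le hr 0)) θ)
  have h2 : HasDerivAt (fun x : ℝ => (mIdx n : ℝ) * x) (mIdx n) y := by
    simpa using (hasDerivAt_id y).const_mul (mIdx n : ℝ)
  have h := (h2.sin.const_mul (r ^ (mIdx n ^ 2))).div_const (((mIdx n : ℝ) ^ 2 - 1) * mIdx n)
  refine h.congr_deriv ?_
  have h1 := one_le_mIdx n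
  rw [← mul_assoc, mul_div_mul_right _ _ (by linarith)]

lemma continuousOn_W : ContinuousOn (fun p : ℝ × ℝ => W p.1 p.2) {p | |p.1| ≤ 1} :=
  continuousOn_const.mul (continuousOn_tsum (fun n => by fun_prop) summable_one_div_succ_sq
    fun n p hp => norm_W_term_le hp p.2 n)

lemma continuousOn_Wt : ContinuousOn (fun p : ℝ × ℝ => Wt p.1 p.2) {p | |p.1| ≤ 1} :=
  continuousOn_const.mul (continuousOn_tsum (fun n => by fun_prop) summable_one_div_succ_sq
    fun n p hp => norm_Wt_term_le hp p.2 n)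

lemma norm_Wr_term_le {r ρ : ℝ} (hρ : ρ ≤ 1) (hr : |r| ≤ ρ) (θ : ℝ) (n : ℕ) :
    ‖(mIdx n : ℝ) * sin (mIdx n * θ) / ((mIdx n : ℝ) ^ 2 - 1) * r ^ (mIdx n ^ 2 - 1)‖ ≤ ρ ^ n := by
  have h1 := one_le_mIdx n
  have h2 := mIdx_sq_sub_one_pos n
  rw [norm_mul, norm_pow]
  have hle : ‖(mIdx n : ℝ) * sin (mIdx n * θ) / ((mIdx n : ℝ) ^ 2 - 1)‖ ≤ 1 := by
    rw [norm_div, norm_mul, Real.norm_of_nonneg h2.le, div_le_one h2,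
      Real.norm_of_nonneg (by linarith)]
    exact (mul_le_of_le_one_right (by linarith) (abs_sin_le_one _)).trans (mIdx_le_sq_sub_one n)
  have h3 := le_mIdx_sq_sub n
  refine (mul_le_of_le_one_left (by positivity) hle).trans ?_
  exact (pow_le_pow_left₀ (norm_nonneg _) hr _).trans
    (pow_le_pow_of_le_one ((abs_nonneg r).trans hr) hρ (by omega))

lemma norm_Wrr_term_le {r ρ : ℝ} (hρ : ρ ≤ 1) (hr : |r| ≤ ρ) (θ : ℝ) (n : ℕ) :
    ‖(mIdx n : ℝ) * sin (mIdx n * θ) * r ^ (mIdx n ^ 2 - 2)‖ ≤ (4 * n + 2) * ρ ^ n := by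
  have h1 := one_le_mIdx n
  rw [norm_mul, norm_pow, norm_mul, Real.norm_of_nonneg (by linarith : (0 : ℝ) ≤ mIdx n), ← mIdx_cast]
  have h3 := le_mIdx_sq_sub n
  refine mul_le_mul (mul_le_of_le_one_right (by linarith) (abs_sin_le_one _)) ?_ (by positivity)
    (by linarith)
  exact (pow_le_pow_left₀ (norm_nonneg _) hr _).trans
    (pow_le_pow_of_le_one ((abs_nonneg r).trans hr) hρ (by omega))

lemma summable_Wrr_bound {ρ : ℝ} (h0 : 0 ≤ ρ) (h1 : ρ < 1) :
    Summable fun n : ℕ => (4 * (n : ℝ) + 2) * ρ ^ n := by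
  have s1 : Summable fun n : ℕ => (n : ℝ) * ρ ^ n := by
    simpa using summable_pow_mul_geometric_of_norm_lt_one 1
      (show ‖ρ‖ < 1 by rwa [Real.norm_of_nonneg h0])
  refine ((s1.mul_left 4).add ((summable_geometric_of_lt_one h0 h1).mul_left 2)).congr fun n => ?_
  ring

lemma exists_between_abs {r : ℝ} (hr : |r| < 1) : ∃ ρ, 0 ≤ ρ ∧ ρ < 1 ∧ |r| < ρ := by
  obtain ⟨ρ, h1, h2⟩ := exists_between hr
  exact ⟨ρ, (abs_nonneg r).trans h1.le, h2, h1⟩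

lemma hasDerivAt_W_r {r : ℝ} (hr : |r| < 1) (θ : ℝ) :
    HasDerivAt (fun s => W s θ) (Wr r θ) r := by
  obtain ⟨ρ, h0, h1, h2⟩ := exists_between_abs hr
  refine HasDerivAt.const_mul (8 / π) (hasDerivAt_tsum_of_isPreconnected
    (summable_geometric_of_lt_one h0 h1) isOpen_Ioo (isPreconnected_Ioo (a := -ρ) (b := ρ))
    (fun n y hy => ?_) (fun n y hy => norm_Wr_term_le h1.le (abs_lt.2 hy).le θ n) (abs_lt.1 h2)
    (Summable.of_norm_bounded summable_one_div_succ_sq (norm_W_term_le hr.le θ)) (abs_lt.1 h2))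
  have h := ((hasDerivAt_pow (mIdx n ^ 2) y).mul_const (sin ((mIdx n : ℝ) * θ))).div_const
    (((mIdx n : ℝ) ^ 2 - 1) * mIdx n)
  refine h.congr_deriv ?_
  have h1 := one_le_mIdx n
  have h2 := mIdx_sq_sub_one_pos n
  have h3 : (mIdx n : ℝ) ≠ 0 := by linarith
  push_cast
  field_simp

lemma hasDerivAt_Wr {r : ℝ} (hr : |r| < 1) (θ : ℝ) :
    HasDerivAt (fun s => Wr s θ) (Wrr r θ) r := by
  obtain ⟨ρ, h0, h1, h2⟩ := exists_between_abs hr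
  refine HasDerivAt.const_mul (8 / π) (hasDerivAt_tsum_of_isPreconnected
    (summable_Wrr_bound h0 h1) isOpen_Ioo (isPreconnected_Ioo (a := -ρ) (b := ρ))
    (fun n y hy => ?_) (fun n y hy => norm_Wrr_term_le h1.le (abs_lt.2 hy).le θ n) (abs_lt.1 h2)
    (Summable.of_norm_bounded (summable_geometric_of_lt_one h0 h1)
      (norm_Wr_term_le h1.le h2.le θ)) (abs_lt.1 h2))
  have h := (hasDerivAt_pow (mIdx n ^ 2 - 1) y).const_mul
    ((mIdx n : ℝ) * sin (mIdx n * θ) / ((mIdx n : ℝ) ^ 2 - 1))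
  refine h.congr_deriv ?_
  have h2 := mIdx_sq_sub_one_pos n
  have h3 := le_mIdx_sq_sub n
  rw [Nat.cast_sub (by omega), Nat.sub_sub]
  push_cast
  field_simp

lemma continuousAt_Wr {p : ℝ × ℝ} (hp : |p.1| < 1) :
    ContinuousAt (fun p : ℝ × ℝ => Wr p.1 p.2) p := by
  obtain ⟨ρ, h0, h1, h2⟩ := exists_between_abs hp
  have hc : ContinuousOn (fun p : ℝ × ℝ => Wr p.1 p.2) {p : ℝ × ℝ | |p.1| < ρ} :=
    continuousOn_const.mul (continuousOn_tsum (fun n => by fun_prop)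
      (summable_geometric_of_lt_one h0 h1) fun n p hp => norm_Wr_term_le h1.le (le_of_lt hp) p.2 n)
  have ho : IsOpen {p : ℝ × ℝ | |p.1| < ρ} := isOpen_lt continuous_fst.abs continuous_const
  exact ContinuousOn.continuousAt hc (ho.mem_nhds h2)

/-- Strict radial convexity of `W`. The angle `2θ ∈ (0, π)` is reduced to `(0, π/2]` by the
reflection `φ ↦ π - φ`, under which `sin ((2n+1)φ)` is invariant. -/
lemma Wrr_pos {r θ : ℝ} (hr0 : 0 < r) (hr1 : r < 1) (h0 : 0 < θ) (h1 : θ < π / 2) :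
    0 < Wrr r θ := by
  have hp0 : (0 : ℝ) ≤ r ^ 32 := by positivity
  have hp1 : r ^ 32 < 1 := pow_lt_one₀ hr0.le hr1 (by norm_num)
  have key : 0 < ∑' n : ℕ, (r ^ 32) ^ (n * (n + 1) / 2) *
      ((2 * n + 1) * sin ((2 * n + 1) * (2 * θ))) := by
    rcases le_total θ (π / 4) with h | h
    · exact theta_sin_series_pos hp0 hp1 (by linarith) (by linarith)
    · have := theta_sin_series_pos (φ := π - 2 * θ) hp0 hp1 (by linarith) (by linarith)
      refine this.trans_eq (tsum_congr fun n => ?_)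
      congr 2
      rw [← sin_pi_sub, ← sin_add_nat_mul_two_pi _ n]
      congr 1; ring
  have e : Wrr r θ = (8 / π) * (2 * r ^ 2 * ∑' n : ℕ, (r ^ 32) ^ (n * (n + 1) / 2) *
      ((2 * n + 1) * sin ((2 * n + 1) * (2 * θ)))) := by
    rw [Wrr, ← tsum_mul_left (a := 2 * r ^ 2)]
    congr 1
    refine tsum_congr fun n => ?_
    have e1 : mIdx n ^ 2 - 2 = 32 * (n * (n + 1) / 2) + 2 := by rw [mIdx_sq]; omega
    have e2 : (4 * (n : ℝ) + 2) * θ = (2 * n + 1) * (2 * θ) := by ring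
    rw [e1, pow_add, pow_mul, mIdx_cast, e2]
    ring
  rw [e]
  have := pi_pos
  positivity

/-- The radial derivative at the boundary arc, by Abel's limit theorem. Since
`a cos θ + b sin θ < cos θ + sin θ` for `a, b < 1`, no radial maximiser lies on the arc. -/
lemma tendsto_Wr {θ : ℝ} (h0 : 0 < θ) (h1 : θ < π / 2) :
    Tendsto (fun r => Wr r θ) (𝓝[<] 1) (𝓝 (cos θ + sin θ)) := by
  have hm : StrictMono fun n => mIdx n ^ 2 - 1 := by
    intro a b hab
    have h1 : mIdx a < mIdx b := by simp only [mIdx]; omega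
    have h2 := Nat.pow_lt_pow_left h1 two_ne_zero
    have h3 := le_mIdx_sq_sub a
    simp only; omega
  have h := (tendsto_tsum_lacunary hm (tendsto_sum_Wr_coef h0 h1)).const_mul (8 / π)
  have e : 8 / π * (π / 8 * (cos θ + sin θ)) = cos θ + sin θ := by
    have := pi_ne_zero
    field_simp
  rwa [e] at h

lemma W_theta_zero (r : ℝ) : W r 0 = 0 := by simp [W]

lemma mIdx_mul_pi_div_two (n : ℕ) : (mIdx n : ℝ) * (π / 2) = π + n * (2 * π) := by
  rw [mIdx_cast]; ring

lemma W_theta_pi_div_two (r : ℝ) : W r (π / 2) = 0 := by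
  simp [W, mIdx_mul_pi_div_two, sin_add_nat_mul_two_pi]

lemma W_r_zero (θ : ℝ) : W 0 θ = 0 := by
  simp [W, mIdx_sq]

lemma Wr_r_zero (θ : ℝ) : Wr 0 θ = 0 := by
  have : ∀ n, mIdx n ^ 2 - 1 ≠ 0 := fun n => by have := le_mIdx_sq_sub n; omega
  simp [Wr, this]

/-- Since `2/(m²-1) = 1/(m-1) - 1/(m+1)`, this is Leibniz's series for `π/4`. -/
lemma Wt_one_zero : Wt 1 0 = 1 := by
  have hs : Summable fun n : ℕ => (1 : ℝ) ^ (mIdx n ^ 2) * cos ((mIdx n : ℝ) * 0) / ((mIdx n : ℝ) ^ 2 - 1) :=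
    Summable.of_norm_bounded summable_one_div_succ_sq (norm_Wt_term_le (by simp) 0)
  have h1 := hs.hasSum.tendsto_sum_nat
  have hdouble : Tendsto (fun N : ℕ => 2 * N) atTop atTop :=
    tendsto_id.const_mul_atTop' two_pos
  have h2 := (Real.tendsto_sum_pi_div_four.comp hdouble).div_const 2
  have heq : ∀ N : ℕ, (∑ i ∈ Finset.range (2 * N), (-1 : ℝ) ^ i / (2 * i + 1)) / 2 =
      ∑ n ∈ Finset.range N, (1 : ℝ) ^ (mIdx n ^ 2) * cos ((mIdx n : ℝ) * 0) / ((mIdx n : ℝ) ^ 2 - 1) := by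
    intro N
    induction N with
    | zero => simp
    | succ N ih =>
      rw [Finset.sum_range_succ _ N, ← ih, show 2 * (N + 1) = 2 * N + 1 + 1 by ring]
      simp only [Finset.sum_range_succ _ (2 * N + 1), Finset.sum_range_succ _ (2 * N)]
      rw [pow_succ, pow_mul, mIdx_cast]
      have : (4 * (N : ℝ) + 2) ^ 2 - 1 = (4 * N + 1) * (4 * N + 3) := by ring
      rw [this]
      have b1 : (2 * ((2 * N : ℕ) : ℝ) + 1) = 4 * N + 1 := by push_cast; ring
      have b2 : (2 * ((2 * N + 1 : ℕ) : ℝ) + 1) = 4 * N + 3 := by push_cast; ring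
      rw [b1, b2]
      simp
      field_simp
      ring
  have h3 := tendsto_nhds_unique h1 (h2.congr heq)
  rw [Wt, h3]
  have := pi_ne_zero
  field_simp
  norm_num

lemma Wt_one_pi_div_two : Wt 1 (π / 2) = -1 := by
  have h : Wt 1 (π / 2) = -Wt 1 0 := by
    rw [Wt, Wt, ← mul_neg, ← tsum_neg]
    congr 1
    refine tsum_congr fun n => ?_
    rw [mIdx_mul_pi_div_two, cos_add_nat_mul_two_pi]
    simp
    ring
  rw [h, Wt_one_zero]

/-! ### The gradient of `w` in polar coordinates -/

/-- Total differentiability in polar coordinates, from continuity of both partial derivatives. -/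
lemma hasFDerivAt_W {r θ : ℝ} (hr : |r| < 1) :
    HasFDerivAt (fun p : ℝ × ℝ => W p.1 p.2)
      ((Wr r θ • (1 : ℝ →L[ℝ] ℝ)).coprod (Wt r θ • (1 : ℝ →L[ℝ] ℝ))) (r, θ) := by
  have ho : IsOpen {p : ℝ × ℝ | |p.1| < 1} := isOpen_lt continuous_fst.abs continuous_const
  have hev : ∀ᶠ p : ℝ × ℝ in 𝓝 (r, θ), |p.1| < 1 := ho.mem_nhds hr
  refine (hasStrictFDerivAt_uncurry_coprod (u := (r, θ)) (f := W)
    (f₁ := fun r θ => Wr r θ • (1 : ℝ →L[ℝ] ℝ)) (f₂ := fun r θ => Wt r θ • (1 : ℝ →L[ℝ] ℝ))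
    ?_ ?_ ?_ ?_).hasFDerivAt
  · filter_upwards [hev] with p hp
    refine (hasDerivAt_W_r hp p.2).hasFDerivAt.congr_fderiv ?_
    ext; simp [Function.HasUncurry.uncurry]
  · filter_upwards [hev] with p hp
    refine (hasDerivAt_W_theta hp.le p.2).hasFDerivAt.congr_fderiv ?_
    ext; simp [Function.HasUncurry.uncurry]
  · exact (continuousAt_Wr (p := (r, θ)) hr).smul continuousAt_const
  · refine ContinuousAt.smul ?_ continuousAt_const
    exact continuousOn_Wt.continuousAt (hev.mono fun p hp => hp.le)

/-- The Cartesian gradient of `w` expressed through the polar partial derivatives of `W`. -/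
lemma gradw_polar {r θ : ℝ} (hr0 : 0 < r) (hr1 : r < 1) (h0 : 0 < θ) (h1 : θ < π / 2) :
    gradw (r * cos θ, r * sin θ) =
      (Wr r θ * cos θ - Wt r θ * sin θ / r, Wr r θ * sin θ + Wt r θ * cos θ / r) := by
  have hc : 0 < cos θ := cos_pos_of_mem_Ioo ⟨by linarith, h1⟩
  have hsq : (r * cos θ) ^ 2 + (r * sin θ) ^ 2 = r ^ 2 := by
    rw [mul_pow, mul_pow, ← mul_add, cos_sq_add_sin_sq, mul_one]
  have hrr : √((r * cos θ) ^ 2 + (r * sin θ) ^ 2) = r := by rw [hsq, sqrt_sq hr0.le]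
  have hθ : arctan (r * sin θ / (r * cos θ)) = θ := by
    rw [mul_div_mul_left _ _ hr0.ne', ← tan_eq_sin_div_cos, arctan_tan (by linarith) h1]
  have hne : (r * cos θ) ^ 2 + (r * sin θ) ^ 2 ≠ 0 := by rw [hsq]; positivity
  have hW : HasFDerivAt (fun p : ℝ × ℝ => W p.1 p.2)
      ((Wr r θ • (1 : ℝ →L[ℝ] ℝ)).coprod (Wt r θ • (1 : ℝ →L[ℝ] ℝ)))
      (√((r * cos θ) ^ 2 + (r * sin θ) ^ 2), arctan (r * sin θ / (r * cos θ))) := by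
    rw [hrr, hθ]; exact hasFDerivAt_W (by rwa [abs_of_pos hr0])
  have hcs := sin_sq_add_cos_sq θ
  have hden : 1 + (r * sin θ / (r * cos θ)) ^ 2 = 1 / cos θ ^ 2 := by
    field_simp; linarith
  have hp : wp (r * cos θ) (r * sin θ) = Wr r θ * cos θ - Wt r θ * sin θ / r := by
    have d1 : HasDerivAt (fun s : ℝ => √(s ^ 2 + (r * sin θ) ^ 2)) (cos θ) (r * cos θ) := by
      refine ((((hasDerivAt_id (r * cos θ)).pow 2).add_const ((r * sin θ) ^ 2)).sqrt
        hne).congr_deriv ?_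
      simp only [Pi.pow_apply, id]
      rw [hrr]; field_simp; simp [mul_comm]
    have d2 : HasDerivAt (fun s : ℝ => arctan (r * sin θ / s)) (-(sin θ / r)) (r * cos θ) := by
      have hi := ((hasDerivAt_id (r * cos θ)).inv (by simp; constructor <;> positivity)).const_mul
        (r * sin θ)
      refine (hi.arctan.congr_deriv ?_)
      simp only [Pi.inv_apply, id]
      rw [← div_eq_mul_inv, hden]; field_simp
    have := hW.comp_hasDerivAt (r * cos θ) (d1.prodMk d2)
    refine this.deriv.trans ?_
    simp; ring
  have hq : wq (r * cos θ) (r * sin θ) = Wr r θ * sin θ + Wt r θ * cos θ / r := by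
    have d1 : HasDerivAt (fun t : ℝ => √((r * cos θ) ^ 2 + t ^ 2)) (sin θ) (r * sin θ) := by
      refine ((((hasDerivAt_id (r * sin θ)).pow 2).const_add ((r * cos θ) ^ 2)).sqrt
        hne).congr_deriv ?_
      simp only [Pi.pow_apply, id]
      rw [hrr]; field_simp; simp [mul_comm]
    have d2 : HasDerivAt (fun t : ℝ => arctan (t / (r * cos θ))) (cos θ / r) (r * sin θ) := by
      refine (((hasDerivAt_id (r * sin θ)).div_const (r * cos θ)).arctan.congr_deriv ?_)
      simp only [id]
      rw [hden]; field_simp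
    have := hW.comp_hasDerivAt (r * sin θ) (d1.prodMk d2)
    refine this.deriv.trans ?_
    simp; ring
  rw [gradw, hp, hq]

/-! ### Minimax points -/

/-- Maximisers of a continuous family over a compact space depend upper semicontinuously on the
parameter. -/
lemma eventually_maximizer_mem {R Y : Type*} [TopologicalSpace R] [CompactSpace R]
    [TopologicalSpace Y] {f : R → Y → ℝ} (hf : Continuous fun p : R × Y => f p.1 p.2) {y₀ : Y}
    {U : Set R} (hU : IsOpen U) (h : ∀ r, (∀ r', f r' y₀ ≤ f r y₀) → r ∈ U) :
    ∀ᶠ y in 𝓝 y₀, ∀ r, (∀ r', f r' y ≤ f r y) → r ∈ U := by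
  have hC : IsClosed {p : R × Y | (∀ r', f r' p.2 ≤ f p.1 p.2) ∧ p.1 ∈ Uᶜ} := by
    refine IsClosed.and ?_ (hU.isClosed_compl.preimage continuous_fst)
    simp only [ofPred_forall]
    exact isClosed_iInter fun r' =>
      isClosed_le (hf.comp (continuous_const.prodMk continuous_snd)) hf
  have hP := isClosedMap_snd_of_compactSpace _ hC
  have hy : y₀ ∈ (Prod.snd '' {p : R × Y | (∀ r', f r' p.2 ≤ f p.1 p.2) ∧ p.1 ∈ Uᶜ})ᶜ := by
    rintro ⟨p, ⟨h1, h2⟩, rfl⟩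
    exact h2 (h _ h1)
  filter_upwards [hP.isOpen_compl.mem_nhds hy] with y hy r hr
  by_contra hn
  exact hy ⟨(r, y), ⟨hr, hn⟩, rfl⟩

/-- First-order condition for the outer minimum in `min_θ max_r f r θ`: if the inner maximiser `r₀`
at the minimising parameter `θ₀` is unique, the partial derivative in `θ` at `(r₀, θ₀)` satisfies
the variational inequality of a constrained minimum. -/
lemma minimax_first_order {R : Type*} [TopologicalSpace R] [CompactSpace R] [Nonempty R]
    {f f' : R → ℝ → ℝ}
    (hf : Continuous fun p : R × ℝ => f p.1 p.2) (hf' : Continuous fun p : R × ℝ => f' p.1 p.2)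
    (hd : ∀ r θ, HasDerivAt (f r) (f' r θ) θ) {T : Set ℝ} (hT : Convex ℝ T) {r₀ : R} {θ₀ v : ℝ}
    (h0 : θ₀ ∈ T) (hv : v ∈ T) (hmax : ∀ r, f r θ₀ ≤ f r₀ θ₀)
    (huniq : ∀ r, (∀ r', f r' θ₀ ≤ f r θ₀) → r = r₀)
    (hmin : ∀ θ ∈ T, ∀ r, (∀ r', f r' θ ≤ f r θ) → f r₀ θ₀ ≤ f r θ) :
    0 ≤ f' r₀ θ₀ * (v - θ₀) := by
  by_contra! hneg
  have hopen : IsOpen {p : R × ℝ | f' p.1 p.2 * (v - θ₀) < 0} :=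
    isOpen_lt (hf'.mul continuous_const) continuous_const
  obtain ⟨U, V, hU, hV, hrU, hθV, hUV⟩ := isOpen_prod_iff.1 hopen r₀ θ₀ hneg
  obtain ⟨δ, hδ, hball⟩ := Metric.isOpen_iff.1 hV θ₀ hθV
  have hev := eventually_maximizer_mem hf (y₀ := θ₀) hU fun r hr => (huniq r hr).symm ▸ hrU
  have hline : Tendsto (fun s : ℝ => θ₀ + s * (v - θ₀)) (𝓝[>] 0) (𝓝 θ₀) := by
    have : Continuous fun s : ℝ => θ₀ + s * (v - θ₀) := by fun_prop
    simpa using (this.tendsto 0).mono_left nhdsWithin_le_nhds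
  have hs1 : ∀ᶠ s : ℝ in 𝓝[>] 0, s ∈ Ioo (0 : ℝ) 1 := Ioo_mem_nhdsGT one_pos
  obtain ⟨s, ⟨hr, hb⟩, hs0, hs1⟩ :=
    (((hline.eventually hev).and (hline (Metric.ball_mem_nhds θ₀ hδ))).and hs1).exists
  obtain ⟨r, -, hrmax⟩ := isCompact_univ.exists_isMaxOn (f := fun r => f r (θ₀ + s * (v - θ₀)))
    (univ_nonempty (α := R)) (hf.comp (continuous_id.prodMk continuous_const)).continuousOn
  have hrm : ∀ r', f r' (θ₀ + s * (v - θ₀)) ≤ f r (θ₀ + s * (v - θ₀)) := fun r' => hrmax (mem_univ r')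
  have hrU' := hr r hrm
  have hT' : θ₀ + s * (v - θ₀) ∈ T := by
    have := hT.add_smul_sub_mem h0 hv ⟨hs0.le, hs1.le⟩
    simpa using this
  have hge : f r θ₀ ≤ f r (θ₀ + s * (v - θ₀)) := (hmax r).trans (hmin _ hT' r hrm)
  have hdl : ∀ t : ℝ, HasDerivAt (fun t => f r (θ₀ + t * (v - θ₀)))
      (f' r (θ₀ + t * (v - θ₀)) * (v - θ₀)) t := by
    intro t
    have h1 : HasDerivAt (fun t : ℝ => θ₀ + t * (v - θ₀)) (v - θ₀) t := by
      simpa using ((hasDerivAt_id t).mul_const (v - θ₀)).const_add θ₀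
    exact (hd r _).comp t h1
  obtain ⟨t, ht, hslope⟩ := exists_hasDerivAt_eq_slope _ _ hs0
    (fun t _ => (hdl t).continuousAt.continuousWithinAt) (fun t _ => hdl t)
  have htV : θ₀ + t * (v - θ₀) ∈ V := by
    refine hball ?_
    rw [Metric.mem_ball, Real.dist_eq, add_sub_cancel_left, abs_mul] at hb ⊢
    refine lt_of_le_of_lt (mul_le_mul_of_nonneg_right ?_ (abs_nonneg _)) hb
    rw [abs_of_pos ht.1, abs_of_pos hs0]; exact ht.2.le
  have hlt : f' r (θ₀ + t * (v - θ₀)) * (v - θ₀) < 0 := hUV (mk_mem_prod hrU' htV)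
  rw [hslope] at hlt
  simp only [zero_mul, add_zero, sub_zero] at hlt
  have := div_nonneg (sub_nonneg.2 hge) hs0.le
  linarith

lemma cos_sin_pos {θ : ℝ} (h0 : 0 < θ) (h1 : θ < π / 2) : 0 < cos θ ∧ 0 < sin θ :=
  ⟨cos_pos_of_mem_Ioo ⟨by linarith, h1⟩, sin_pos_of_pos_of_lt_pi h0 (by linarith)⟩

lemma strictConvexOn_W {θ : ℝ} (h0 : 0 < θ) (h1 : θ < π / 2) :
    StrictConvexOn ℝ (Icc (0 : ℝ) 1) fun r => W r θ := by
  refine strictConvexOn_of_deriv2_pos (convex_Icc 0 1) ?_ fun r hr => ?_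
  · exact continuousOn_W.comp (f := fun r : ℝ => (r, θ)) (by fun_prop)
      fun r hr => by simpa [abs_of_nonneg hr.1] using hr.2
  · rw [interior_Icc] at hr
    have h2 : |r| < 1 := by rw [abs_of_pos hr.1]; exact hr.2
    have ho : IsOpen {s : ℝ | |s| < 1} := isOpen_lt continuous_abs continuous_const
    have hev : deriv (fun s => W s θ) =ᶠ[𝓝 r] fun s => Wr s θ := by
      filter_upwards [ho.mem_nhds h2] with s hs using (hasDerivAt_W_r hs θ).deriv
    rw [Function.iterate_succ, Function.iterate_one, Function.comp, hev.deriv_eq,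
      (hasDerivAt_Wr h2 θ).deriv]
    exact Wrr_pos hr.1 hr.2 h0 h1

/-- For each angle the radial maximiser of `r (a cos θ + b sin θ) - W r θ` is unique. -/
lemma radial_max_unique {a b θ : ℝ} (ha : 0 < a) (hb : 0 < b) (hθ : θ ∈ Icc 0 (π / 2))
    {r s : ℝ} (hr : r ∈ Icc (0 : ℝ) 1) (hs : s ∈ Icc (0 : ℝ) 1)
    (hrm : ∀ t ∈ Icc (0 : ℝ) 1,
      t * (a * cos θ + b * sin θ) - W t θ ≤ r * (a * cos θ + b * sin θ) - W r θ)
    (hsm : ∀ t ∈ Icc (0 : ℝ) 1,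
      t * (a * cos θ + b * sin θ) - W t θ ≤ s * (a * cos θ + b * sin θ) - W s θ) : r = s := by
  rcases hθ.1.eq_or_lt with rfl | h0
  · have h1 := hrm 1 (by simp)
    have h2 := hsm 1 (by simp)
    simp only [cos_zero, sin_zero, W_theta_zero] at h1 h2
    nlinarith [hr.2, hs.2]
  rcases hθ.2.eq_or_lt with rfl | h1
  · have h1 := hrm 1 (by simp)
    have h2 := hsm 1 (by simp)
    simp only [cos_pi_div_two, sin_pi_div_two, W_theta_pi_div_two] at h1 h2
    nlinarith [hr.2, hs.2]
  have hlin : ConcaveOn ℝ (Icc (0 : ℝ) 1) fun t => t * (a * cos θ + b * sin θ) :=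
    ⟨convex_Icc 0 1, fun x _ y _ p q _ _ _ => by simp only [smul_eq_mul]; apply le_of_eq; ring⟩
  exact (hlin.sub_strictConvexOn (strictConvexOn_W h0 h1)).eq_of_isMaxOn hrm hsm hr hs

/-- At an interior angle the radial maximiser is an interior critical point. -/
lemma radial_critical {a b θ r : ℝ} (ha : a ∈ Ioo (0 : ℝ) 1) (hb : b ∈ Ioo (0 : ℝ) 1)
    (h0 : 0 < θ) (h1 : θ < π / 2) (hr : r ∈ Icc (0 : ℝ) 1)
    (hrm : ∀ t ∈ Icc (0 : ℝ) 1,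
      t * (a * cos θ + b * sin θ) - W t θ ≤ r * (a * cos θ + b * sin θ) - W r θ) :
    0 < r ∧ r < 1 ∧ Wr r θ = a * cos θ + b * sin θ := by
  obtain ⟨hc, hs⟩ := cos_sin_pos h0 h1
  set c := a * cos θ + b * sin θ with hcdef
  have hcpos : 0 < c := add_pos (mul_pos ha.1 hc) (mul_pos hb.1 hs)
  have hclt : c < cos θ + sin θ := by nlinarith [ha.2, hb.2]
  have hd : ∀ t : ℝ, |t| < 1 → HasDerivAt (fun t => t * c - W t θ) (c - Wr t θ) t := fun t ht => by
    exact (hasDerivAt_mul_const c).sub (hasDerivAt_W_r ht θ)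
  have hcont : ContinuousOn (fun t => t * c - W t θ) (Icc 0 1) :=
    ContinuousOn.sub (by fun_prop) (continuousOn_W.comp (f := fun r : ℝ => (r, θ)) (by fun_prop)
      fun r hr => by simpa [abs_of_nonneg hr.1] using hr.2)
  have hr0 : 0 < r := by
    refine hr.1.lt_of_ne fun h => ?_
    subst h
    -- At `r = 0` the slope of the payoff is `c > 0`, because `Wr 0 θ = 0`.
    have hmax : IsLocalMaxOn (fun t => t * c - W t θ) (Icc 0 1) 0 :=
      IsMaxOn.localize (s := Icc (0 : ℝ) 1) fun t ht => hrm t ht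
    have hle := hmax.hasFDerivWithinAt_nonpos (hd 0 (by simp)).hasFDerivAt.hasFDerivWithinAt
      (y := 1) (mem_posTangentConeAt_of_segment_subset (by simp [segment_eq_Icc]))
    simp [Wr_r_zero] at hle
    linarith
  have hr1 : r < 1 := by
    refine hr.2.lt_of_ne fun h => ?_
    subst h
    -- Near `r = 1` the slope `c - Wr r θ` is negative, so the payoff decreases up to `r = 1`.
    have hev := (tendsto_Wr h0 h1).eventually (lt_mem_nhds hclt)
    obtain ⟨l, hl, hl'⟩ := (mem_nhdsLT_iff_exists_Ioo_subset.1
      (inter_mem hev (Ioo_mem_nhdsLT (zero_lt_one (α := ℝ)))))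
    have hl1 : l < 1 := hl
    set m := (max l 0 + 1) / 2 with hm
    have hm0 : max l 0 < m := by have := max_lt hl1 one_pos; linarith
    have hm1 : m < 1 := by have := max_lt hl1 one_pos; linarith
    have hm00 : 0 ≤ m := (le_max_right l 0).trans hm0.le
    have hml : l < m := (le_max_left l 0).trans_lt hm0
    have hanti : StrictAntiOn (fun t => t * c - W t θ) (Icc m 1) := by
      refine strictAntiOn_of_deriv_neg (convex_Icc m 1)
        (hcont.mono (Icc_subset_Icc_left hm00)) fun t ht => ?_
      rw [interior_Icc] at ht
      obtain ⟨h3, h4⟩ := hl' ⟨hml.trans ht.1, ht.2⟩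
      rw [(hd t (by rw [abs_of_pos h4.1]; exact h4.2)).deriv]
      exact sub_neg.2 h3
    have := hanti ⟨le_rfl, hm1.le⟩ ⟨hm1.le, le_rfl⟩ hm1
    have := hrm m ⟨hm00, hm1.le⟩
    simp only at *
    linarith
  refine ⟨hr0, hr1, ?_⟩
  have hloc : IsLocalMax (fun t => t * c - W t θ) r := by
    filter_upwards [Icc_mem_nhds hr0 hr1] with t ht using hrm t ht
  have := hloc.hasDerivAt_eq_zero (hd r (by rwa [abs_of_pos hr0]))
  linarith

/-- The function whose minimax over `(r, θ)` defines `u x y`. -/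
noncomputable def saddleFn (x : ℝ × ℝ) (r : Icc (0 : ℝ) 1) (θ : ℝ) : ℝ :=
  (r : ℝ) * (x.1 * cos θ + x.2 * sin θ) - W r θ

lemma abs_coe_Icc_le (r : Icc (0 : ℝ) 1) : |(r : ℝ)| ≤ 1 := by
  rw [abs_of_nonneg r.2.1]; exact r.2.2

lemma continuous_W_Icc : Continuous fun p : Icc (0 : ℝ) 1 × ℝ => W p.1 p.2 :=
  continuousOn_W.comp_continuous (f := fun p : Icc (0 : ℝ) 1 × ℝ => ((p.1 : ℝ), p.2))
    (by fun_prop) fun p => abs_coe_Icc_le p.1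

lemma continuous_Wt_Icc : Continuous fun p : Icc (0 : ℝ) 1 × ℝ => Wt p.1 p.2 :=
  continuousOn_Wt.comp_continuous (f := fun p : Icc (0 : ℝ) 1 × ℝ => ((p.1 : ℝ), p.2))
    (by fun_prop) fun p => abs_coe_Icc_le p.1

/-- A minimax point of `saddleFn x` lies in the open sector and the gradient of `w` there is `x`. -/
lemma gradw_eq_of_minimax {x : ℝ × ℝ} (hx : x ∈ Ω1) {r₀ : Icc (0 : ℝ) 1} {θ₀ : ℝ}
    (h0 : θ₀ ∈ Icc 0 (π / 2)) (hmax : ∀ r, saddleFn x r θ₀ ≤ saddleFn x r₀ θ₀)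
    (hmin : ∀ θ ∈ Icc 0 (π / 2), ∀ r, (∀ r', saddleFn x r' θ ≤ saddleFn x r θ) →
      saddleFn x r₀ θ₀ ≤ saddleFn x r θ) :
    ((r₀ : ℝ) * cos θ₀, (r₀ : ℝ) * sin θ₀) ∈ B1 ∧
      gradw ((r₀ : ℝ) * cos θ₀, (r₀ : ℝ) * sin θ₀) = x := by
  obtain ⟨⟨ha0, ha1⟩, hb0, hb1⟩ := hx
  have hpi := pi_pos
  -- First-order condition in the angle; `v` ranges over the two endpoints below.
  have key : ∀ v ∈ Icc 0 (π / 2),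
      0 ≤ ((r₀ : ℝ) * (-x.1 * sin θ₀ + x.2 * cos θ₀) - Wt r₀ θ₀) * (v - θ₀) := by
    intro v hv
    refine minimax_first_order (f := saddleFn x)
      (f' := fun r θ => (r : ℝ) * (-x.1 * sin θ + x.2 * cos θ) - Wt r θ) ?_ ?_ ?_
      (convex_Icc 0 (π / 2)) h0 hv hmax ?_ hmin
    · exact Continuous.sub (by fun_prop) continuous_W_Icc
    · exact Continuous.sub (by fun_prop) continuous_Wt_Icc
    · intro r θ
      refine ((((hasDerivAt_cos θ).const_mul x.1).add
        ((hasDerivAt_sin θ).const_mul x.2)).const_mul (r : ℝ)).sub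
        (hasDerivAt_W_theta (abs_coe_Icc_le r) θ) |>.congr_deriv ?_
      ring
    · intro r hr
      exact Subtype.ext (radial_max_unique ha0 hb0 h0 r.2 r₀.2 (fun t ht => hr ⟨t, ht⟩)
        fun t ht => hmax ⟨t, ht⟩)
  have hone : (1 : ℝ) ∈ Icc (0 : ℝ) 1 := by simp
  -- At `θ = 0` the maximiser is `r = 1` and the angular derivative `x.2 - 1` is negative.
  have hpos : 0 < θ₀ := by
    refine h0.1.lt_of_ne fun h => ?_
    subst h
    have hr1 : (r₀ : ℝ) = 1 := by
      have h1 := hmax ⟨1, hone⟩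
      simp only [saddleFn, cos_zero, sin_zero, W_theta_zero] at h1
      nlinarith [r₀.2.2]
    have := key (π / 2) ⟨by linarith, le_rfl⟩
    rw [hr1, Wt_one_zero] at this
    simp at this
    nlinarith
  -- At `θ = π/2` the maximiser is `r = 1` and the angular derivative `1 - x.1` is positive.
  have hlt : θ₀ < π / 2 := by
    refine h0.2.lt_of_ne fun h => ?_
    subst h
    have hr1 : (r₀ : ℝ) = 1 := by
      have h1 := hmax ⟨1, hone⟩
      simp only [saddleFn, cos_pi_div_two, sin_pi_div_two, W_theta_pi_div_two] at h1
      nlinarith [r₀.2.2]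
    have := key 0 ⟨le_rfl, by linarith⟩
    rw [hr1, Wt_one_pi_div_two] at this
    simp at this
    nlinarith
  obtain ⟨hr0, hr1, hWr⟩ := radial_critical ⟨ha0, ha1⟩ ⟨hb0, hb1⟩ hpos hlt r₀.2
    fun t ht => hmax ⟨t, ht⟩
  have hWt : Wt r₀ θ₀ = r₀ * (-x.1 * sin θ₀ + x.2 * cos θ₀) := by
    have h1 := key (π / 2) ⟨by linarith, le_rfl⟩
    have h2 := key 0 ⟨le_rfl, by linarith⟩
    have h3 := nonneg_of_mul_nonneg_left h1 (sub_pos.2 hlt)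
    have h4 : (r₀ : ℝ) * (-x.1 * sin θ₀ + x.2 * cos θ₀) - Wt r₀ θ₀ ≤ 0 := by
      by_contra! h; nlinarith
    linarith
  obtain ⟨hc, hs⟩ := cos_sin_pos hpos hlt
  have hcs := sin_sq_add_cos_sq θ₀
  refine ⟨⟨mul_pos hr0 hc, mul_pos hr0 hs, ?_⟩, ?_⟩
  · have : ((r₀ : ℝ) * cos θ₀) ^ 2 + ((r₀ : ℝ) * sin θ₀) ^ 2 = (r₀ : ℝ) ^ 2 := by
      linear_combination (r₀ : ℝ) ^ 2 * hcs
    rw [this]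
    exact pow_lt_one₀ hr0.le hr1 two_ne_zero
  · rw [gradw_polar hr0 hr1 hpos hlt, hWr, hWt]
    ext
    · simp only
      field_simp
      linear_combination x.1 * hcs
    · simp only
      field_simp
      linear_combination x.2 * hcs

/-! ### The envelope theorem -/

/-- Envelope theorem for a minimax value: suppose every minimax point `(r, t)` of the payoff
`⟪y, G (r, t)⟫ - V (r, t)`, for `y` in an open set, is sent by `G` to the single point `g y`.
Then `g` is continuous and is the gradient of the minimax value. -/
theorem minimax_envelope {R T : Type*} [TopologicalSpace R] [CompactSpace R] [Nonempty R]
    [TopologicalSpace T] [CompactSpace T] [Nonempty T]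
    {G : R × T → ℝ × ℝ} (hG : Continuous G) {V : R × T → ℝ} (hV : Continuous V)
    {F : ℝ × ℝ → R → T → ℝ}
    (hF : ∀ y r t, F y r t = y.1 * (G (r, t)).1 + y.2 * (G (r, t)).2 - V (r, t))
    {Ω : Set (ℝ × ℝ)} (hΩ : IsOpen Ω) {g : ℝ × ℝ → ℝ × ℝ}
    (hg : ∀ y ∈ Ω, ∀ r t, (∀ r', F y r' t ≤ F y r t) →
      (∀ t' r', (∀ r'', F y r'' t' ≤ F y r' t') → F y r t ≤ F y r' t') → G (r, t) = g y) :
    ContinuousOn g Ω ∧ ∀ x ∈ Ω, HasFDerivAt (fun y => ⨅ t, ⨆ r, F y r t)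
      ((g x).1 • ContinuousLinearMap.fst ℝ ℝ ℝ + (g x).2 • ContinuousLinearMap.snd ℝ ℝ ℝ) x := by
  have hFc : Continuous fun p : (ℝ × ℝ) × R × T => F p.1 p.2.1 p.2.2 := by
    simp only [hF]; fun_prop
  have hexR : ∀ y t, ∃ r, ∀ r', F y r' t ≤ F y r t := by
    intro y t
    obtain ⟨r, -, hr⟩ := isCompact_univ.exists_isMaxOn (f := fun r => F y r t)
      (univ_nonempty (α := R)) (hFc.comp (g := fun p : (ℝ × ℝ) × R × T => F p.1 p.2.1 p.2.2)
        (f := fun r => (y, r, t)) (by fun_prop)).continuousOn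
    exact ⟨r, fun r' => hr (mem_univ r')⟩
  set φ : ℝ × ℝ → T → ℝ := fun y t => ⨆ r, F y r t with hφ
  have hφmax : ∀ {y r t}, (∀ r', F y r' t ≤ F y r t) → φ y t = F y r t := fun {y r t} h =>
    le_antisymm (ciSup_le h) (le_ciSup (f := fun r => F y r t) ⟨F y r t, by rintro _ ⟨r', rfl⟩; exact h r'⟩ r)
  have hφge : ∀ y r t, F y r t ≤ φ y t := fun y r t => by
    obtain ⟨s, hs⟩ := hexR y t
    rw [hφmax hs]; exact hs r
  have hφc : Continuous fun p : (ℝ × ℝ) × T => φ p.1 p.2 := by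
    have := isCompact_univ.continuous_sSup (K := (univ : Set R))
      (f := fun (p : (ℝ × ℝ) × T) r => F p.1 r p.2)
      (hFc.comp (g := fun p : (ℝ × ℝ) × R × T => F p.1 p.2.1 p.2.2)
        (f := fun p : ((ℝ × ℝ) × T) × R => (p.1.1, p.2, p.1.2)) (by fun_prop))
    simp only [image_univ] at this
    exact this
  have hexT : ∀ y, ∃ t, ∀ t', φ y t ≤ φ y t' := by
    intro y
    obtain ⟨t, -, ht⟩ := isCompact_univ.exists_isMinOn (f := fun t => φ y t)
      (univ_nonempty (α := T)) (hφc.comp (continuous_const.prodMk continuous_id)).continuousOn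
    exact ⟨t, fun t' => ht (mem_univ t')⟩
  have hu : ∀ {y t}, (∀ t', φ y t ≤ φ y t') → (⨅ t, φ y t) = φ y t := fun {y t} h =>
    le_antisymm (ciInf_le ⟨φ y t, by rintro _ ⟨t', rfl⟩; exact h t'⟩ t) (le_ciInf h)
  have hg' : ∀ y ∈ Ω, ∀ r t, (∀ r', F y r' t ≤ F y r t) → (∀ t', φ y t ≤ φ y t') →
      G (r, t) = g y := by
    intro y hy r t hr ht
    refine hg y hy r t hr fun t' r' h' => ?_
    rw [← hφmax hr, ← hφmax h']; exact ht t'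
  -- Near the diagonal point `(x, x)`, an outer minimiser for `y` combined with an inner maximiser
  -- for `z` is still sent close to `g x`.
  have hnear : ∀ x ∈ Ω, ∀ U, IsOpen U → g x ∈ U → ∀ᶠ q : (ℝ × ℝ) × (ℝ × ℝ) in 𝓝 (x, x),
      ∀ r t, (∀ t', φ q.1 t ≤ φ q.1 t') → (∀ r', F q.2 r' t ≤ F q.2 r t) → G (r, t) ∈ U := by
    intro x hx U hU hgU
    set C : Set (((ℝ × ℝ) × (ℝ × ℝ)) × (R × T)) := {p | ((∀ t', φ p.1.1 p.2.2 ≤ φ p.1.1 t') ∧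
      (∀ r', F p.1.2 r' p.2.2 ≤ F p.1.2 p.2.1 p.2.2)) ∧ G p.2 ∈ Uᶜ} with hCdef
    have hC : IsClosed C := by
      refine IsClosed.and (IsClosed.and ?_ ?_) (hU.isClosed_compl.preimage (hG.comp continuous_snd))
      · simp only [ofPred_forall]
        exact isClosed_iInter fun t' => isClosed_le
          (hφc.comp (f := fun p : ((ℝ × ℝ) × (ℝ × ℝ)) × (R × T) => (p.1.1, p.2.2)) (by fun_prop))
          (hφc.comp (f := fun p : ((ℝ × ℝ) × (ℝ × ℝ)) × (R × T) => (p.1.1, t')) (by fun_prop))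
      · simp only [ofPred_forall]
        exact isClosed_iInter fun r' => isClosed_le
          (hFc.comp (f := fun p : ((ℝ × ℝ) × (ℝ × ℝ)) × (R × T) => (p.1.2, r', p.2.2))
            (by fun_prop))
          (hFc.comp (f := fun p : ((ℝ × ℝ) × (ℝ × ℝ)) × (R × T) => (p.1.2, p.2.1, p.2.2))
            (by fun_prop))
    have hP := isClosedMap_fst_of_compactSpace _ hC
    have hxx : (x, x) ∈ (Prod.fst '' C)ᶜ := by
      rintro ⟨⟨q, r, t⟩, ⟨⟨h1, h2⟩, h3⟩, rfl⟩
      exact h3 ((hg' x hx r t h2 h1).symm ▸ hgU)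
    filter_upwards [hP.isOpen_compl.mem_nhds hxx] with q hq r t ht hr
    by_contra hn
    exact hq ⟨(q, (r, t)), ⟨⟨ht, hr⟩, hn⟩, rfl⟩
  -- The payoff is affine in its first argument, with gradient `G (r, t)`.
  have hdiff : ∀ x y r t, F y r t = F x r t +
      ((y - x).1 * (G (r, t)).1 + (y - x).2 * (G (r, t)).2) := by
    intro x y r t
    rw [hF, hF, Prod.fst_sub, Prod.snd_sub]; ring
  refine ⟨fun x hx => ContinuousAt.continuousWithinAt ?_, fun x hx => ?_⟩
  · refine tendsto_nhds.2 fun U hU hgU => ?_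
    have hd : Tendsto (fun y : ℝ × ℝ => (y, y)) (𝓝 x) (𝓝 (x, x)) :=
      (continuous_id.prodMk continuous_id).tendsto x
    filter_upwards [hd.eventually (hnear x hx U hU hgU), hΩ.mem_nhds hx] with y hy hyΩ
    obtain ⟨t, ht⟩ := hexT y
    obtain ⟨r, hr⟩ := hexR y t
    rw [mem_preimage, ← hg' y hyΩ r t hr ht]
    exact hy r t ht hr
  · rw [hasFDerivAt_iff_isLittleO, Asymptotics.isLittleO_iff]
    intro ε hε
    have hn := hnear x hx (Metric.ball (g x) (ε / 2)) Metric.isOpen_ball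
      (Metric.mem_ball_self (by positivity))
    have hd1 : Tendsto (fun y : ℝ × ℝ => (y, x)) (𝓝 x) (𝓝 (x, x)) :=
      (continuous_id.prodMk continuous_const).tendsto x
    have hd2 : Tendsto (fun y : ℝ × ℝ => (x, y)) (𝓝 x) (𝓝 (x, x)) :=
      (continuous_const.prodMk continuous_id).tendsto x
    filter_upwards [hd1.eventually hn, hd2.eventually hn] with y hy1 hy2
    have hball : ∀ z ∈ Metric.ball (g x) (ε / 2),
        |((y - x).1 * z.1 + (y - x).2 * z.2) - ((y - x).1 * (g x).1 + (y - x).2 * (g x).2)| ≤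
          ε * ‖y - x‖ := by
      intro z hz
      rw [Metric.mem_ball, dist_eq_norm] at hz
      have a1 := (norm_fst_le (z - g x)).trans hz.le
      have a2 := (norm_snd_le (z - g x)).trans hz.le
      have b1 := norm_fst_le (y - x)
      have b2 := norm_snd_le (y - x)
      have e : ((y - x).1 * z.1 + (y - x).2 * z.2) - ((y - x).1 * (g x).1 + (y - x).2 * (g x).2)
          = (y - x).1 * (z - g x).1 + (y - x).2 * (z - g x).2 := by
        rw [Prod.fst_sub z, Prod.snd_sub z]; ring
      rw [e]
      refine (abs_add_le _ _).trans ?_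
      rw [abs_mul, abs_mul]
      have c1 := mul_le_mul b1 a1 (norm_nonneg _) (norm_nonneg _)
      have c2 := mul_le_mul b2 a2 (norm_nonneg _) (norm_nonneg _)
      simp only [Real.norm_eq_abs] at c1 c2
      linarith
    obtain ⟨tx, htx⟩ := hexT x
    obtain ⟨ty, hty⟩ := hexT y
    obtain ⟨r1, hr1⟩ := hexR x ty
    obtain ⟨r2, hr2⟩ := hexR y tx
    have hb1 := abs_le.1 (hball _ (hy1 r1 ty hty hr1))
    have hb2 := abs_le.1 (hball _ (hy2 r2 tx htx hr2))
    -- lower bound for `u y`: outer minimiser for `y`, inner maximiser for `x`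
    have hlow : φ x tx + ((y - x).1 * (G (r1, ty)).1 + (y - x).2 * (G (r1, ty)).2) ≤ φ y ty := by
      have h1 := hφge y r1 ty
      rw [hdiff x y, ← hφmax hr1] at h1
      linarith [htx ty]
    -- upper bound for `u y`: outer minimiser for `x`, inner maximiser for `y`
    have hupp : φ y ty ≤ φ x tx + ((y - x).1 * (G (r2, tx)).1 + (y - x).2 * (G (r2, tx)).2) := by
      refine (hty tx).trans ?_
      rw [hφmax hr2, hdiff x y]
      linarith [hφge x r2 tx]
    have e : ((g x).1 • ContinuousLinearMap.fst ℝ ℝ ℝ + (g x).2 • ContinuousLinearMap.snd ℝ ℝ ℝ)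
        (y - x) = (y - x).1 * (g x).1 + (y - x).2 * (g x).2 := by
      simp; ring
    rw [hu hty, hu htx, e, Real.norm_eq_abs, abs_le]
    constructor <;> linarith

/-! ### The gradient of `u` -/

/-- `u ∈ C¹(Ω₁)` (also across the diagonal), with `∇u(x) = g(x)ᵀ` where
`g` is the inverse of `∇wᵀ : B₁ → Ω₁`. -/
theorem stmt15 (g : ℝ × ℝ → ℝ × ℝ)
    (hbij : Set.BijOn gradw B1 Ω1) (hinv : Set.InvOn g gradw B1 Ω1) :
    ContDiffOn ℝ 1 (fun p : ℝ × ℝ => u p.1 p.2) Ω1 ∧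
    ∀ x ∈ Ω1, HasFDerivAt (fun p : ℝ × ℝ => u p.1 p.2)
      ((g x).1 • ContinuousLinearMap.fst ℝ ℝ ℝ + (g x).2 • ContinuousLinearMap.snd ℝ ℝ ℝ) x := by
  have hΩ : IsOpen Ω1 := isOpen_Ioo.prod isOpen_Ioo
  have : Nonempty (Icc (0 : ℝ) (π / 2)) := ⟨⟨0, le_rfl, by positivity⟩⟩
  obtain ⟨hgc, hder⟩ := minimax_envelope (R := Icc (0 : ℝ) 1) (T := Icc (0 : ℝ) (π / 2))
    (G := fun p => ((p.1 : ℝ) * cos p.2, (p.1 : ℝ) * sin p.2)) (V := fun p => W p.1 p.2)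
    (F := fun y r t => saddleFn y r t) (g := g) (by fun_prop)
    (continuous_W_Icc.comp (f := fun p : Icc (0 : ℝ) 1 × Icc (0 : ℝ) (π / 2) => (p.1, (p.2 : ℝ)))
      (by fun_prop)) (fun y r t => by simp only [saddleFn]; ring) hΩ
    (fun y hy r t hr ht => by
      obtain ⟨h1, h2⟩ := gradw_eq_of_minimax hy t.2 hr fun θ hθ s hs => ht ⟨θ, hθ⟩ s hs
      have h3 := hinv.1 h1
      rw [h2] at h3
      exact h3.symm)
  refine ⟨?_, hder⟩
  rw [← zero_add (1 : WithTop ℕ∞), contDiffOn_succ_iff_hasFDerivWithinAt_of_uniqueDiffOn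
    hΩ.uniqueDiffOn]
  refine ⟨by simp, _, contDiffOn_zero.2 ?_, fun x hx => (hder x hx).hasFDerivWithinAt⟩
  exact ((continuous_fst.comp_continuousOn hgc).smul continuousOn_const).add
    ((continuous_snd.comp_continuousOn hgc).smul continuousOn_const)
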